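/- arXiv:1703.06489 — 2 statements merged into one kernel-verified Lean document; each statement's English description precedes it below -/
import Mathlib

section
/- With the lattice data as in the context, the cohomology class of ω is independent of the choice of section and alternating bicharacter: if s, s′ are two normalized sections of M → M/L and c₀, c₀′ are two alternating bicharacters on M each restricting to (α,β) ↦ (−1)^{B(α,β)} on L, and ω, ω′ are the corresponding 3-cocycles on A := M/L (ω(a,b,c) := (−1)^{B(s(c), d(a,b))}·c₀(s(c), d(a,b)) with d(a,b) := s(a)+s(b)−s(a+b), and similarly for ω′ using s′, c₀′), then there exists η : A × A → ℂˣ such that ω′(a,b,c)·ω(a,b,c)⁻¹ = η(b,c)·η(a,b+c)·η(a+b,c)⁻¹·η(a,b)⁻¹ for all a, b, c ∈ A. -/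
/-!
Put `d(a, b) = s(a) + s(b) - s(a + b)`. As `ε ^ 2 = 1`, the map `(x, α) ↦ ε ^ B(x, α) c₀(x, α)` is
trivial on `L × L`, so it descends to a pairing `e` of `A = M / L` with `L` for which
`ω(a, b, c) = e(c, d(a, b))`. Changing `s` changes `d` by the coboundary of `t = s' - s : A → L`,
hence `ω` by the coboundary of `(a, b) ↦ e(b, t(a))`.

Changing `c₀` multiplies `ω` by `f(s(c), d(a, b))`, where `f = c₀' / c₀` is alternating on `M` and
trivial on `L`. Pull `f` back to the free group `F = ℤ[A]` along `a ↦ s(a)`. There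
`f(x, y) = q(x, y) - q(y, x)` with `q` bilinear, and `q` is symmetric on the preimage `K` of `L`.
Since `K` is free, `q(x, y) = Q(x + y) - Q(x) - Q(y)` on `K` for some function `Q`, and with `q` and
`Q` at hand a primitive of the cocycle can be written down.
-/

section FreeModules

variable {R V G ι : Type*} [CommRing R] [AddCommGroup V] [Module R V] [AddCommGroup G] [Module R G]

theorem linearIndependent_of_triangular [NoZeroDivisors R] {κ : Type*} [LinearOrder κ] {v : κ → V}
    (φ : κ → V →ₗ[R] R) (hdiag : ∀ i, φ i (v i) ≠ 0) (hlt : ∀ i j, i < j → φ j (v i) = 0) :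
    LinearIndependent R v := by
  refine linearIndependent_iff.mpr fun l hl => ?_
  by_contra hne
  let m := l.support.max' (Finsupp.support_nonempty_iff.mpr hne)
  have hm : m ∈ l.support := l.support.max'_mem _
  have heval : φ m (Finsupp.linearCombination R v l) = l m * φ m (v m) := by
    simp only [Finsupp.linearCombination_apply, Finsupp.sum, map_sum, map_smul, smul_eq_mul]
    refine Finset.sum_eq_single m (fun i hi him => ?_) fun h => absurd hm h
    rw [hlt i m ((l.support.le_max' i hi).lt_of_ne him), mul_zero]
  rw [hl, map_zero] at heval
  exact mul_ne_zero (Finsupp.mem_support_iff.mp hm) (hdiag m) heval.symm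

theorem le_span_of_leading_coeff_dvd [LinearOrder ι] [WellFoundedLT ι]
    {N : Submodule R (ι →₀ R)} {k : ι → ι →₀ R}
    (hk : ∀ i, k i ∈ N ⊓ Finsupp.supported R R (Set.Iic i))
    (hdvd : ∀ i, ∀ x ∈ N ⊓ Finsupp.supported R R (Set.Iic i), k i i ∣ x i) :
    N ≤ Submodule.span R (k '' {i | k i i ≠ 0}) := by
  have eq_zero_or_mem_supported (x : ι →₀ R) :
      x = 0 ∨ ∃ i ∈ x.support, x ∈ Finsupp.supported R R (Set.Iic i) := by
    refine x.support.eq_empty_or_nonempty.imp Finsupp.support_eq_empty.mp fun hx => ?_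
    exact ⟨_, x.support.max'_mem hx, fun j hj => x.support.le_max' j hj⟩
  have supported_le_span (i : ι) : N ⊓ Finsupp.supported R R (Set.Iic i) ≤
      Submodule.span R (k '' {i | k i i ≠ 0}) := by
    induction i using WellFoundedLT.induction with
    | ind i ih =>
    intro x hx
    have mem_of_apply_eq_zero {y : ι →₀ R} (hy : y ∈ N ⊓ Finsupp.supported R R (Set.Iic i))
        (hyi : y i = 0) : y ∈ Submodule.span R (k '' {i | k i i ≠ 0}) := by
      obtain rfl | ⟨j, hj, hyj⟩ := eq_zero_or_mem_supported y
      · exact zero_mem _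
      · have hji : j ≠ i := by rintro rfl; exact Finsupp.mem_support_iff.mp hj hyi
        exact ih j ((hy.2 hj).lt_of_ne hji) ⟨hy.1, hyj⟩
    obtain ⟨r, hr⟩ := hdvd i x hx
    by_cases hki : k i i = 0
    · exact mem_of_apply_eq_zero hx (by rw [hr, hki, zero_mul])
    · have hsub : x - r • k i ∈ Submodule.span R (k '' {i | k i i ≠ 0}) :=
        mem_of_apply_eq_zero (sub_mem hx (Submodule.smul_mem _ r (hk i))) <| by
          rw [Finsupp.sub_apply, Finsupp.smul_apply, hr, smul_eq_mul, mul_comm, sub_self]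
      rw [← sub_add_cancel x (r • k i)]
      exact add_mem hsub (Submodule.smul_mem _ r (Submodule.subset_span ⟨i, hki, rfl⟩))
  intro x hx
  obtain rfl | ⟨i, -, hxi⟩ := eq_zero_or_mem_supported x
  · exact zero_mem _
  · exact supported_le_span i ⟨hx, hxi⟩

theorem free_submodule_finsupp [IsDomain R] [IsPrincipalIdealRing R] (N : Submodule R (ι →₀ R)) :
    Module.Free R N := by
  obtain ⟨_, _⟩ := exists_wellFoundedLT (α := ι)
  let leadingIdeal i : Ideal R :=
    (N ⊓ Finsupp.supported R R (Set.Iic i)).map (Finsupp.lapply i)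
  have exists_leading i : ∃ k ∈ N ⊓ Finsupp.supported R R (Set.Iic i),
      k i = Submodule.IsPrincipal.generator (leadingIdeal i) :=
    Submodule.IsPrincipal.generator_mem (leadingIdeal i)
  choose k hk hki using exists_leading
  have hdvd i (x) (hx : x ∈ N ⊓ Finsupp.supported R R (Set.Iic i)) : k i i ∣ x i := by
    rw [hki, ← Submodule.IsPrincipal.mem_iff_generator_dvd]
    exact ⟨x, hx, rfl⟩
  let S := {i | k i i ≠ 0}
  have hspan : Submodule.span R (k '' S) = N := by
    refine le_antisymm (Submodule.span_le.mpr ?_) (le_span_of_leading_coeff_dvd hk hdvd)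
    rintro _ ⟨i, -, rfl⟩
    exact (hk i).1
  have hli : LinearIndependent R fun i : S => k i :=
    linearIndependent_of_triangular (fun i => Finsupp.lapply i.1) (fun i => i.2) fun i j hij =>
      Finsupp.notMem_support_iff.mp fun h => ((hk i).2 h).not_gt hij
  rw [← hspan, Set.image_eq_range]
  exact Module.Free.of_basis (Module.Basis.span hli)

theorem free_submodule_of_isPrincipalIdealRing [IsDomain R] [IsPrincipalIdealRing R]
    [Module.Free R V] (N : Submodule R V) : Module.Free R N := by
  let e := (Module.Free.chooseBasis R V).repr
  have := free_submodule_finsupp (N.map e.toLinearMap)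
  exact Module.Free.of_equiv (e.submoduleMap N).symm

/-- The bilinear map whose matrix in the ordered basis `b` is the strictly upper triangular part of
the matrix of `q`. It splits alternating and symmetric maps into triangular pieces. -/
noncomputable def strictUpperPart [LinearOrder ι] (b : Module.Basis ι R V)
    (q : V →ₗ[R] V →ₗ[R] G) : V →ₗ[R] V →ₗ[R] G :=
  b.constr ℕ fun i => b.constr ℕ fun j => if i < j then q (b i) (b j) else 0

theorem strictUpperPart_apply_basis [LinearOrder ι] (b : Module.Basis ι R V)
    (q : V →ₗ[R] V →ₗ[R] G) (i j : ι) :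
    strictUpperPart b q (b i) (b j) = if i < j then q (b i) (b j) else 0 := by
  simp only [strictUpperPart, Module.Basis.constr_basis]

theorem exists_eq_sub_flip_of_isAlt [Module.Free R V] {f : V →ₗ[R] V →ₗ[R] G} (hf : f.IsAlt) :
    ∃ q : V →ₗ[R] V →ₗ[R] G, f = q - q.flip := by
  let b := Module.Free.chooseBasis R V
  obtain ⟨_, _⟩ := exists_wellFoundedLT (α := Module.Free.ChooseBasisIndex R V)
  refine ⟨strictUpperPart b f, b.ext fun i => b.ext fun j => ?_⟩
  simp only [LinearMap.sub_apply, LinearMap.flip_apply, strictUpperPart_apply_basis]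
  rcases lt_trichotomy i j with h | rfl | h
  · simp [h, h.not_gt]
  · simp [hf.self_eq_zero]
  · simp [h, h.not_gt, hf.neg]

theorem choose_two_add [BinomialRing R] (x y : R) :
    Ring.choose (x + y) 2 = Ring.choose x 2 + Ring.choose y 2 + x * y := by
  rw [Ring.add_choose_eq 2 (Commute.all x y), Finset.Nat.sum_antidiagonal_eq_sum_range_succ_mk]
  simp only [Finset.sum_range_succ, Finset.sum_range_zero, Nat.sub_zero, Nat.sub_self,
    Nat.reduceSub, Ring.choose_zero_right, Ring.choose_one_right]
  ring

/-- The bilinear map with diagonal matrix `g` in the basis `b`. Coordinates are multiplied pointwise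
in `ι →₀ R`, so that no sum has to be written out. -/
noncomputable def diagonalForm (b : Module.Basis ι R V) (g : ι → G) : V →ₗ[R] V →ₗ[R] G :=
  LinearMap.mk₂ R (fun x y => Finsupp.linearCombination R g (b.repr x * b.repr y))
    (fun x x' y => by rw [map_add, add_mul, map_add])
    (fun c x y => by rw [← map_smul, map_smul]; congr 1; ext i; simp [mul_assoc])
    (fun x y y' => by rw [map_add, mul_add, map_add])
    (fun c x y => by rw [← map_smul, map_smul]; congr 1; ext i; simp [mul_left_comm])

open Classical in
theorem diagonalForm_apply_basis (b : Module.Basis ι R V) (g : ι → G) (i j : ι) :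
    diagonalForm b g (b i) (b j) = if i = j then g i else 0 := by
  have single_mul_single : (Finsupp.single i 1 * Finsupp.single j 1 : ι →₀ R) =
      if i = j then Finsupp.single i 1 else 0 := by
    ext l
    by_cases hl : i = l <;> by_cases hij : i = j <;> simp_all
  simp only [diagonalForm, LinearMap.mk₂_apply, Module.Basis.repr_self, single_mul_single]
  split_ifs <;> simp

theorem exists_quadratic_refinement_diagonalForm [BinomialRing R] (b : Module.Basis ι R V)
    (g : ι → G) : ∃ Q : V → G, ∀ x y, Q (x + y) = Q x + Q y + diagonalForm b g x y := by
  let chooseTwo (x : V) : ι →₀ R := (b.repr x).mapRange (Ring.choose · 2) (by simp)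
  have chooseTwo_add (x y : V) :
      chooseTwo (x + y) = chooseTwo x + chooseTwo y + b.repr x * b.repr y := by
    ext i
    simp [chooseTwo, choose_two_add]
  refine ⟨fun x => Finsupp.linearCombination R g (chooseTwo x), fun x y => ?_⟩
  simp only [chooseTwo_add, map_add, diagonalForm, LinearMap.mk₂_apply]

theorem exists_quadratic_refinement_of_symm [BinomialRing R] [Module.Free R V]
    {q : V →ₗ[R] V →ₗ[R] G} (hq : ∀ x y, q x y = q y x) :
    ∃ Q : V → G, ∀ x y, Q (x + y) = Q x + Q y + q x y := by
  let b := Module.Free.chooseBasis R V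
  obtain ⟨_, _⟩ := exists_wellFoundedLT (α := Module.Free.ChooseBasisIndex R V)
  let u := strictUpperPart b q
  let d := diagonalForm b fun i => q (b i) (b i)
  have decomp : q = u + u.flip + d := by
    refine b.ext fun i => b.ext fun j => ?_
    simp only [LinearMap.add_apply, LinearMap.flip_apply, u, strictUpperPart_apply_basis, d,
      diagonalForm_apply_basis]
    rcases lt_trichotomy i j with h | rfl | h
    · simp [h, h.not_gt, h.ne]
    · simp
    · simp [h, h.not_gt, h.ne', hq (b j)]
  obtain ⟨Q, hQ⟩ : ∃ Q : V → G, ∀ x y, Q (x + y) = Q x + Q y + d x y :=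
    exists_quadratic_refinement_diagonalForm b _
  refine ⟨fun x => u x x + Q x, fun x y => ?_⟩
  simp only [hQ, decomp, map_add, LinearMap.add_apply, LinearMap.flip_apply]
  abel

end FreeModules

section Cochains

variable {A G : Type*} [AddCommGroup A] [AddCommGroup G]

/-- `φ` is the coboundary of an inhomogeneous 2-cochain, for the trivial action of `A` on `G`. -/
def IsCoboundary₃ (φ : A → A → A → G) : Prop :=
  ∃ η : A → A → G, ∀ a b c, φ a b c = η b c + η a (b + c) - η (a + b) c - η a b

theorem IsCoboundary₃.add {φ ψ : A → A → A → G} (hφ : IsCoboundary₃ φ) (hψ : IsCoboundary₃ ψ) :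
    IsCoboundary₃ fun a b c => φ a b c + ψ a b c := by
  obtain ⟨η, hη⟩ := hφ
  obtain ⟨θ, hθ⟩ := hψ
  refine ⟨fun a b => η a b + θ a b, fun a b c => ?_⟩
  simp only [hη, hθ]
  abel

/-- The failure of additivity of `s`. When `s` is a section of a quotient map, this is the 2-cocycle
`d` of the corresponding extension. -/
def addDefect {N : Type*} [AddCommGroup N] (s : A → N) (a b : A) : N :=
  s a + s b - s (a + b)

theorem isCoboundary₃_pairing_addDefect {N : Type*} [AddCommGroup N] (e : A →+ N →+ G) (t : A → N) :
    IsCoboundary₃ fun a b c => e c (addDefect t a b) := by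
  refine ⟨fun a b => e b (t a), fun a b c => ?_⟩
  simp only [addDefect, map_sub, map_add, AddMonoidHom.add_apply]
  abel

variable {R F : Type*} [CommRing R] [AddCommGroup F] [Module R F] [Module R G]

theorem isCoboundary₃_sub_flip_addDefect (q : F →ₗ[R] F →ₗ[R] G) (K : Submodule R F) (Q : K → G)
    (hQ : ∀ x y : K, Q (x + y) = Q x + Q y + q x y) (s : A → F) (hs : ∀ a b, addDefect s a b ∈ K) :
    IsCoboundary₃ fun a b c => q (s c) (addDefect s a b) - q (addDefect s a b) (s c) := by
  let d a b : K := ⟨addDefect s a b, hs a b⟩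
  refine ⟨fun a b => q (s b) (s a) - q (d a b) (s (a + b)) - Q (d a b), fun a b c => ?_⟩
  have cocycle : d b c + d a (b + c) = d a b + d (a + b) c := by
    ext
    simp only [d, addDefect, Submodule.coe_add, add_assoc a b c]
    abel
  have hQd : Q (d b c) + Q (d a (b + c)) + q (d b c) (d a (b + c)) =
      Q (d a b) + Q (d (a + b) c) + q (d a b) (d (a + b) c) := by
    rw [← hQ, ← hQ, cocycle]
  simp only [d, addDefect, map_add, map_sub, LinearMap.add_apply, LinearMap.sub_apply,
    add_assoc a b c] at hQd ⊢
  linear_combination (norm := abel) hQd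

variable {M : Type*} [AddCommGroup M] [Module R M]
  [IsDomain R] [IsPrincipalIdealRing R] [BinomialRing R]

theorem isCoboundary₃_of_isAlt {f : M →ₗ[R] M →ₗ[R] G} (hf : f.IsAlt) {L : Submodule R M}
    (hfL : ∀ x ∈ L, ∀ y ∈ L, f x y = 0) {s : A → M} (hs : ∀ a b, addDefect s a b ∈ L) :
    IsCoboundary₃ fun a b c => f (s c) (addDefect s a b) := by
  let p : (A →₀ R) →ₗ[R] M := Finsupp.linearCombination R s
  let σ : A → A →₀ R := fun a => Finsupp.single a 1
  have hp : ∀ a, p (σ a) = s a := fun a => by simp [p, σ]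
  have hpd : ∀ a b, p (addDefect σ a b) = addDefect s a b := fun a b => by
    simp only [addDefect, map_sub, map_add, hp]
  obtain ⟨q, hq⟩ := exists_eq_sub_flip_of_isAlt (f := f.compl₁₂ p p) fun x => hf (p x)
  have hfq : ∀ x y, f (p x) (p y) = q x y - q y x := fun x y => LinearMap.congr_fun₂ hq x y
  let K : Submodule R (A →₀ R) := L.comap p
  have := free_submodule_of_isPrincipalIdealRing K
  have hqK (x y : K) : q.domRestrict₁₂ K K x y = q.domRestrict₁₂ K K y x :=
    sub_eq_zero.mp ((hfq x y).symm.trans (hfL _ x.2 _ y.2))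
  obtain ⟨Q, hQ⟩ := exists_quadratic_refinement_of_symm (V := K) hqK
  have h := isCoboundary₃_sub_flip_addDefect q K Q hQ σ fun a b => by
    rw [Submodule.mem_comap, hpd]; exact hs a b
  simpa only [← hfq, hp, hpd] using h

end Cochains

section Bicharacters

variable {M N G : Type*} [AddCommGroup M] [AddCommGroup N] [CommGroup G]

/-- A bicharacter with values in a multiplicative group, as a biadditive map. -/
def bicharacterHom (c : M → N → G) (h₁ : ∀ x y z, c (x + y) z = c x z * c y z)
    (h₂ : ∀ x y z, c x (y + z) = c x y * c x z) : M →+ N →+ Additive G :=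
  AddMonoidHom.mk' (fun x => AddMonoidHom.mk' (fun y => Additive.ofMul (c x y)) fun y z =>
    congrArg Additive.ofMul (h₂ x y z)) fun x y =>
      AddMonoidHom.ext fun z => congrArg Additive.ofMul (h₁ x y z)

theorem exists_isAlt_eq_div_of_diag_eq {c c' : M → M → G}
    (h₁ : ∀ x y z, c (x + y) z = c x z * c y z) (h₂ : ∀ x y z, c x (y + z) = c x y * c x z)
    (h₁' : ∀ x y z, c' (x + y) z = c' x z * c' y z) (h₂' : ∀ x y z, c' x (y + z) = c' x y * c' x z)
    (hdiag : ∀ x, c' x x = c x x) :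
    ∃ f : M →ₗ[ℤ] M →ₗ[ℤ] Additive G, f.IsAlt ∧ ∀ x y, f x y = Additive.ofMul (c' x y / c x y) := by
  let f : M →+ M →+ Additive G := bicharacterHom c' h₁' h₂' - bicharacterHom c h₁ h₂
  have hf (x y : M) : f x y = Additive.ofMul (c' x y / c x y) := rfl
  refine ⟨(addMonoidHomLequivInt ℤ).toLinearMap ∘ₗ f.toIntLinearMap, fun x => ?_, hf⟩
  exact (hf x x).trans (by rw [hdiag, div_self', ofMul_one])

theorem exists_quotient_pairing {R : Type*} [AddGroupWithOne R] {L : AddSubgroup M} {ε : G}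
    (hε : ε ^ 2 = 1) {B : M → L → R} (hB₁ : ∀ x y α, B (x + y) α = B x α + B y α)
    (hB₂ : ∀ x α β, B x (α + β) = B x α + B x β) (hBint : ∀ x α, ∃ n : ℤ, B x α = n)
    {c : M → L → G} (hc₁ : ∀ x y α, c (x + y) α = c x α * c y α)
    (hc₂ : ∀ x α β, c x (α + β) = c x α * c x β)
    (hcL : ∀ α β : L, ∀ n : ℤ, (n : R) = B α β → c α β = ε ^ n) :
    ∃ e : M ⧸ L →+ L →+ Additive G, ∀ (x : M) (α : L) (n : ℤ), (n : R) = B x α →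
      e x α = Additive.ofMul (ε ^ n * c x α) := by
  have hB0 : B 0 0 = 0 := by simpa using hB₁ 0 0 0
  have hc0 : c 0 0 = 1 := by simpa using hc₁ 0 0 0
  -- `ℤ → R` need not be injective, but `hcL` at `(0, 0)` shows that `(n : R)` determines `ε ^ n`.
  have zpow_congr {m k : ℤ} (h : (m : R) = k) : ε ^ m = ε ^ k := by
    have hmk : c 0 0 = ε ^ (m - k) := hcL 0 0 _ (by
      rw [Int.cast_sub, h, sub_self]; exact hB0.symm)
    rwa [hc0, zpow_sub, eq_comm, mul_inv_eq_one] at hmk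
  choose n hn using hBint
  let E x α := ε ^ n x α * c x α
  have hE {x α} {m : ℤ} (hm : (m : R) = B x α) : E x α = ε ^ m * c x α := by
    rw [zpow_congr (hm.trans (hn x α))]
  let e : M →+ L →+ Additive G := bicharacterHom E
    (fun x y α => by
      rw [hE (m := n x α + n y α) (by rw [Int.cast_add, ← hn, ← hn, hB₁]), zpow_add, hc₁,
        mul_mul_mul_comm])
    (fun x α β => by
      rw [hE (m := n x α + n x β) (by rw [Int.cast_add, ← hn, ← hn, hB₂]), zpow_add, hc₂,
        mul_mul_mul_comm])
  have he_eq_zero : ∀ α ∈ L, e α = 0 := fun α hα => by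
    ext β
    change E α β = 1
    have hc : c α β = ε ^ n α β := hcL ⟨α, hα⟩ β _ (hn α β).symm
    rw [hE (hn α β).symm, hc, ← mul_zpow, ← sq, hε, one_zpow]
  exact ⟨QuotientAddGroup.lift L e he_eq_zero, fun x α m hm => congrArg Additive.ofMul (hE hm)⟩

end Bicharacters

theorem addDefect_mem_of_section {M : Type*} [AddCommGroup M] {L : AddSubgroup M} {s : M ⧸ L → M}
    (hs : ∀ a, (s a : M ⧸ L) = a) (a b : M ⧸ L) : addDefect s a b ∈ L := by
  rw [← QuotientAddGroup.eq_zero_iff]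
  simp only [addDefect, QuotientAddGroup.mk_sub, QuotientAddGroup.mk_add, hs, sub_self]

theorem lattice_omega_class_independent_of_choices_general
    {M G R : Type*} [AddCommGroup M] [CommGroup G] [AddGroupWithOne R] (L : AddSubgroup M)
    (ε : G) (hε : ε ^ 2 = 1)
    (B : M → M → R)
    (hBadd₁ : ∀ x y z : M, B (x + y) z = B x z + B y z)
    (hBadd₂ : ∀ x y z : M, B x (y + z) = B x y + B x z)
    (hBint : ∀ x : M, ∀ α ∈ L, ∃ n : ℤ, B x α = (n : R))
    (c₀ c₀' : M → M → G)
    (hc₀add₁ : ∀ x y z : M, c₀ (x + y) z = c₀ x z * c₀ y z)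
    (hc₀add₂ : ∀ x y z : M, c₀ x (y + z) = c₀ x y * c₀ x z)
    (hc₀L : ∀ α ∈ L, ∀ β ∈ L, ∀ n : ℤ, (n : R) = B α β → c₀ α β = ε ^ n)
    (hc₀'add₁ : ∀ x y z : M, c₀' (x + y) z = c₀' x z * c₀' y z)
    (hc₀'add₂ : ∀ x y z : M, c₀' x (y + z) = c₀' x y * c₀' x z)
    (hc₀'L : ∀ α ∈ L, ∀ β ∈ L, ∀ n : ℤ, (n : R) = B α β → c₀' α β = ε ^ n)
    (hdiag : ∀ x : M, c₀' x x = c₀ x x)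
    (s s' : M ⧸ L → M)
    (hs : ∀ a : M ⧸ L, ((s a : M) : M ⧸ L) = a)
    (hs' : ∀ a : M ⧸ L, ((s' a : M) : M ⧸ L) = a)
    (ω ω' : (M ⧸ L) → (M ⧸ L) → (M ⧸ L) → G)
    (hω : ∀ a b c : M ⧸ L, ∀ n : ℤ, (n : R) = B (s c) (s a + s b - s (a + b)) →
      ω a b c = ε ^ n * c₀ (s c) (s a + s b - s (a + b)))
    (hω' : ∀ a b c : M ⧸ L, ∀ n : ℤ, (n : R) = B (s' c) (s' a + s' b - s' (a + b)) →
      ω' a b c = ε ^ n * c₀' (s' c) (s' a + s' b - s' (a + b))) :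
    ∃ η : (M ⧸ L) → (M ⧸ L) → G, ∀ a b c : M ⧸ L,
      ω' a b c * (ω a b c)⁻¹ =
        η b c * η a (b + c) * (η (a + b) c)⁻¹ * (η a b)⁻¹ := by
  obtain ⟨e, he⟩ := exists_quotient_pairing (c := fun x (α : L) => c₀' x α) hε
    (fun x y α => hBadd₁ x y α) (fun x α β => hBadd₂ x α β) (fun x α => hBint x α α.2)
    (fun x y α => hc₀'add₁ x y α) (fun x α β => hc₀'add₂ x α β) (fun α β => hc₀'L α α.2 β β.2)
  have he_section {σ : M ⧸ L → M} (hσ : ∀ a, (σ a : M ⧸ L) = a) (c : M ⧸ L) (α : L) (n : ℤ)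
      (hn : (n : R) = B (σ c) α) : e c α = Additive.ofMul (ε ^ n * c₀' (σ c) α) := by
    simpa only [hσ] using he (σ c) α n hn
  obtain ⟨f, hf_alt, hf⟩ :=
    exists_isAlt_eq_div_of_diag_eq hc₀add₁ hc₀add₂ hc₀'add₁ hc₀'add₂ hdiag
  have hfL : ∀ x ∈ L, ∀ y ∈ L, f x y = 0 := fun x hx y hy => by
    obtain ⟨n, hn⟩ := hBint x y hy
    rw [hf, hc₀L x hx y hy n hn.symm, hc₀'L x hx y hy n hn.symm, div_self', ofMul_one]
  let d a b : L := ⟨addDefect s a b, addDefect_mem_of_section hs a b⟩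
  let d' a b : L := ⟨addDefect s' a b, addDefect_mem_of_section hs' a b⟩
  let t a : L := ⟨s' a - s a, QuotientAddGroup.eq_iff_sub_mem.mp ((hs' a).trans (hs a).symm)⟩
  have hd' a b : d' a b = d a b + addDefect t a b := by
    ext
    simp only [d, d', t, addDefect, AddSubgroup.coe_add, AddSubgroup.coe_sub]
    abel
  have hω'e a b c : Additive.ofMul (ω' a b c) = e c (d' a b) := by
    obtain ⟨n, hn⟩ := hBint (s' c) (d' a b) (d' a b).2
    rw [hω' a b c n hn.symm, he_section hs' c _ n hn.symm]
    rfl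
  have hωe a b c : Additive.ofMul (ω a b c) = e c (d a b) - f (s c) (addDefect s a b) := by
    obtain ⟨n, hn⟩ := hBint (s c) (d a b) (d a b).2
    rw [hω a b c n hn.symm, he_section hs c _ n hn.symm, hf, ← ofMul_div, mul_div_assoc,
      div_div_cancel]
    rfl
  obtain ⟨η, hη⟩ := (isCoboundary₃_of_isAlt (L := L.toIntSubmodule) hf_alt hfL
    (addDefect_mem_of_section hs)).add (isCoboundary₃_pairing_addDefect e t)
  refine ⟨fun a b => (η a b).toMul, fun a b c => ?_⟩
  have hωη : Additive.ofMul (ω' a b c * (ω a b c)⁻¹) =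
      η b c + η a (b + c) - η (a + b) c - η a b :=
    calc
      _ = f (s c) (addDefect s a b) + e c (addDefect t a b) := by
        rw [ofMul_mul, ofMul_inv, hω'e, hωe, hd', map_add]
        abel
      _ = _ := hη a b c
  simpa only [toMul_add, toMul_sub, div_eq_mul_inv, toMul_ofMul] using congrArg Additive.toMul hωη

/-- The cohomology class of the lattice 3-cocycle `ω` is independent of the chosen
normalized section and alternating bicharacter: two such choices yield 3-cocycles
differing by the coboundary of a 2-cochain `η` on `A = M/L`. -/
theorem lattice_omega_class_independent_of_choices
    {M : Type*} [AddCommGroup M] (L : AddSubgroup M)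
    (B : M → M → ℚ)
    (hBsymm : ∀ x y : M, B x y = B y x)
    (hBadd₁ : ∀ x y z : M, B (x + y) z = B x z + B y z)
    (hBadd₂ : ∀ x y z : M, B x (y + z) = B x y + B x z)
    (hBint : ∀ x : M, ∀ α ∈ L, ∃ n : ℤ, B x α = (n : ℚ))
    (hBeven : ∀ α ∈ L, ∃ n : ℤ, B α α = 2 * (n : ℚ))
    (c₀ c₀' : M → M → ℂˣ)
    (hc₀add₁ : ∀ x y z : M, c₀ (x + y) z = c₀ x z * c₀ y z)
    (hc₀add₂ : ∀ x y z : M, c₀ x (y + z) = c₀ x y * c₀ x z)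
    (hc₀alt : ∀ x : M, c₀ x x = 1)
    (hc₀L : ∀ α ∈ L, ∀ β ∈ L, ∀ n : ℤ, (n : ℚ) = B α β → c₀ α β = (-1 : ℂˣ) ^ n)
    (hc₀'add₁ : ∀ x y z : M, c₀' (x + y) z = c₀' x z * c₀' y z)
    (hc₀'add₂ : ∀ x y z : M, c₀' x (y + z) = c₀' x y * c₀' x z)
    (hc₀'alt : ∀ x : M, c₀' x x = 1)
    (hc₀'L : ∀ α ∈ L, ∀ β ∈ L, ∀ n : ℤ, (n : ℚ) = B α β → c₀' α β = (-1 : ℂˣ) ^ n)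
    (s s' : M ⧸ L → M)
    (hs : ∀ a : M ⧸ L, ((s a : M) : M ⧸ L) = a)
    (hs0 : s 0 = 0)
    (hs' : ∀ a : M ⧸ L, ((s' a : M) : M ⧸ L) = a)
    (hs'0 : s' 0 = 0)
    (ω ω' : (M ⧸ L) → (M ⧸ L) → (M ⧸ L) → ℂˣ)
    (hω : ∀ a b c : M ⧸ L, ∀ n : ℤ,
      (n : ℚ) = B (s c) (s a + s b - s (a + b)) →
      ω a b c = (-1 : ℂˣ) ^ n * c₀ (s c) (s a + s b - s (a + b)))
    (hω' : ∀ a b c : M ⧸ L, ∀ n : ℤ,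
      (n : ℚ) = B (s' c) (s' a + s' b - s' (a + b)) →
      ω' a b c = (-1 : ℂˣ) ^ n * c₀' (s' c) (s' a + s' b - s' (a + b))) :
    ∃ η : (M ⧸ L) → (M ⧸ L) → ℂˣ, ∀ a b c : M ⧸ L,
      ω' a b c * (ω a b c)⁻¹ =
        η b c * η a (b + c) * (η (a + b) c)⁻¹ * (η a b)⁻¹ := by
  exact lattice_omega_class_independent_of_choices_general L (-1) neg_one_sq B hBadd₁ hBadd₂ hBint
    c₀ c₀' hc₀add₁ hc₀add₂ hc₀L hc₀'add₁ hc₀'add₂ hc₀'L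
    (fun x => (hc₀'alt x).trans (hc₀alt x).symm) s s' hs hs' ω ω' hω hω'
end

section
/- Let G be a finite group containing exactly one element of order 2, and let T be a Sylow 2-subgroup of G. Then the 2-primary component of the third group cohomology H³(G, ℂˣ) (with ℂˣ a trivial G-module), i.e. the subgroup of elements of 2-power order, is a cyclic group of order |T|. -/
/-!
A Sylow 2-subgroup `T` of `G` has a unique involution, so it is cyclic or generalized quaternion.
In the quaternion case the trivial module `A` begins an exact sequence `A → J → J² → J² → J`, where
`J` consists of the functions `T → A` and is acyclic. In both cases `H³(T, A) ≃ A[|T|]`, which is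
cyclic of order `|T|` for `A = ℂˣ`.

The involution `z` of `G` generates a normal subgroup `Z ≤ T` with `H³(Z, A)` of order 2, on which
conjugation can only act trivially. By the double coset formula, transferring a class from `T` to
`G` and restricting it to `Z` multiplies its restriction to `Z` by the odd number `[G : T]`. Since
`H³(T, A)` is a cyclic 2-group whose restriction to `Z` is nonzero, `res ∘ tr` is surjective on it,
and hence `H³(T, A)` is the 2-primary component of `H³(G, A)`.
-/

section StableElements

variable {p : ℕ}

theorem mem_zmultiples_of_forall_nsmul_ne {P : Type*} [AddCommGroup P] [IsAddCyclic P] {n : ℕ}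
    (hp : p.Prime) (hP : Nat.card P = p ^ n) {u : P} (hu : ∀ v : P, p • v ≠ u) (x : P) :
    x ∈ AddSubgroup.zmultiples u := by
  obtain ⟨g, hg⟩ := exists_zsmul_surjective P
  obtain ⟨k, rfl⟩ := hg u
  obtain ⟨l, rfl⟩ := hg x
  have hpk : ¬ (p : ℤ) ∣ k := by
    rintro ⟨j, rfl⟩
    exact hu (j • g) (by
      simp only [mul_zsmul, natCast_zsmul, smul_comm p j g])
  have hcoprime : IsCoprime (p ^ n : ℤ) k :=
    (((Nat.prime_iff_prime_int.1 hp).coprime_iff_not_dvd).2 hpk).pow_left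
  obtain ⟨a, b, hab⟩ := hcoprime
  have hg0 : (p ^ n : ℤ) • g = 0 := by
    rw [← Nat.cast_pow, ← hP, natCast_zsmul, card_nsmul_eq_zero']
  refine AddSubgroup.mem_zmultiples_iff.2 ⟨l * b, ?_⟩
  calc (l * b) • k • g = l • (a * p ^ n + b * k) • g := by
        rw [add_zsmul, mul_zsmul g a, hg0, zsmul_zero, zero_add, mul_zsmul, mul_zsmul]
    _ = l • g := by rw [hab, one_zsmul]

/-- The character `χ` detects `P / p`, so `φ` acts on `P / p` as the unit `m`. -/
theorem surjective_of_map_eq_nsmul {P Z : Type*} [AddCommGroup P] [IsAddCyclic P]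
    [AddCommGroup Z] {n m : ℕ} (hp : p.Prime) (hP : Nat.card P = p ^ n) (hm : p.Coprime m)
    (φ : P →+ P) {χ : P →+ Z} (hχ : χ ≠ 0) (hpχ : ∀ y, p • χ y = 0) (hφ : ∀ y, χ (φ y) = m • χ y) :
    Function.Surjective φ := by
  obtain ⟨g, hg⟩ := exists_zsmul_surjective P
  have hχg : χ g ≠ 0 := fun h => hχ <| AddMonoidHom.ext fun y => by
    obtain ⟨k, rfl⟩ := hg y
    rw [map_zsmul, h, zsmul_zero, AddMonoidHom.zero_apply]
  have hu (v : P) : p • v ≠ φ g := by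
    intro hv
    have hmχ : m • χ g = 0 := by rw [← hφ, ← hv, map_nsmul, hpχ]
    refine hχg (AddMonoid.addOrderOf_eq_one_iff.1 (Nat.eq_one_of_dvd_coprimes hm ?_ ?_))
    exacts [addOrderOf_dvd_of_nsmul_eq_zero (hpχ g), addOrderOf_dvd_of_nsmul_eq_zero hmχ]
  intro y
  obtain ⟨k, rfl⟩ := mem_zmultiples_of_forall_nsmul_ne hp hP hu y
  exact ⟨k • g, map_zsmul φ k g⟩

theorem eq_zero_of_mem_primaryComponent {H : Type*} [AddCommGroup H] {m : ℕ}
    (hm : p.Coprime m) {x : H} (hx : x ∈ AddCommGroup.primaryComponent H p) (hmx : m • x = 0) :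
    x = 0 := by
  obtain ⟨k, hk⟩ := hx
  exact AddMonoid.addOrderOf_eq_one_iff.1 <| Nat.eq_one_of_dvd_coprimes (hm.pow_left k)
    (addOrderOf_dvd_of_nsmul_eq_zero hk) (addOrderOf_dvd_of_nsmul_eq_zero hmx)

theorem nonempty_primaryComponent_addEquiv {H P Z : Type*} [AddCommGroup H] [AddCommGroup P]
    [IsAddCyclic P] [AddCommGroup Z] {n m : ℕ} (hp : p.Prime) (hP : Nat.card P = p ^ n)
    (hm : p.Coprime m) {res : H →+ P} {tr : P →+ H} (htr : ∀ x, tr (res x) = m • x)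
    {χ : P →+ Z} (hχ : χ ≠ 0) (hpχ : ∀ y, p • χ y = 0)
    (hstable : ∀ y, χ (res (tr y)) = m • χ y) :
    Nonempty (AddCommGroup.primaryComponent H p ≃+ P) := by
  refine ⟨.ofBijective (res.comp (AddCommGroup.primaryComponent H p).subtype) ⟨?_, ?_⟩⟩
  · rw [injective_iff_map_eq_zero]
    rintro ⟨x, hx⟩ hres
    refine Subtype.ext (eq_zero_of_mem_primaryComponent hm hx ?_)
    rw [← htr, show res x = 0 from hres, map_zero]
  · intro y
    obtain ⟨w, rfl⟩ := surjective_of_map_eq_nsmul hp hP hm (res.comp tr) hχ hpχ hstable y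
    have hw : p ^ n • tr w = 0 := by rw [← map_nsmul, ← hP, card_nsmul_eq_zero', map_zero]
    exact ⟨⟨tr w, n, hw⟩, rfl⟩

end StableElements

section Classification

open Subgroup

theorem exists_mem_center_orderOf_eq_prime {p : ℕ} [hp : Fact p.Prime] {G : Type*} [Group G]
    [Finite G] (hG : IsPGroup p G) {N : Subgroup G} [N.Normal] (hN : N ≠ ⊥) :
    ∃ c ∈ N, c ∈ center G ∧ orderOf c = p := by
  have hdvd : p ∣ Nat.card N :=
    (hG.to_subgroup N).card_eq_or_dvd.resolve_left (mt N.card_eq_one.1 hN)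
  obtain ⟨b, hb, hb1⟩ := (hG.of_equiv
    ConjAct.toConjAct).exists_fixed_point_of_prime_dvd_card_of_fixed_point N hdvd
    (a := 1) (fun g => smul_one g)
  have hbc : (b : G) ∈ center G := mem_center_iff.2 fun g =>
    mul_inv_eq_iff_eq_mul.1 (congrArg Subtype.val (hb (ConjAct.toConjAct g)))
  have hb' : (b : G) ≠ 1 := fun h => hb1 (Subtype.ext h.symm)
  have hpb := hG.dvd_orderOf hb'
  refine ⟨(b : G) ^ (orderOf (b : G) / p), N.pow_mem b.2 _, pow_mem hbc _, ?_⟩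
  exact orderOf_pow_orderOf_div (orderOf_pos _).ne' hpb

theorem exists_commute_pow_mem_of_notMem {p : ℕ} [hp : Fact p.Prime] {G : Type*}
    [Group G] [Finite G] (hG : IsPGroup p G) (A : Subgroup G) [A.Normal] {g : G}
    (hg : g ∉ A) (hgA : g ∈ centralizer (A : Set G)) :
    ∃ u ∉ A, u ∈ centralizer (A : Set G) ∧ u ^ p ∈ A ∧ ∀ h : G, h * u * h⁻¹ * u⁻¹ ∈ A := by
  let π := QuotientGroup.mk' A
  have hker (a : G) : π a = 1 ↔ a ∈ A := QuotientGroup.eq_one_iff a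
  have : ((centralizer (A : Set G)).map π).Normal :=
    Normal.map inferInstance π (QuotientGroup.mk'_surjective A)
  have hne : (centralizer (A : Set G)).map π ≠ ⊥ := fun h =>
    hg ((hker g).1 (mem_bot.1 (h ▸ mem_map_of_mem π hgA)))
  obtain ⟨_, ⟨u, hu, rfl⟩, hcenter, horder⟩ :=
    exists_mem_center_orderOf_eq_prime (hG.to_quotient A) hne
  refine ⟨u, fun h => ?_, hu, (hker _).1 ?_, fun h => (hker _).1 ?_⟩
  · rw [(hker u).2 h, orderOf_one] at horder
    exact hp.out.one_lt.ne horder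
  · rw [map_pow, ← horder, pow_orderOf_eq_one]
  · rw [map_mul, map_mul, map_mul, mem_center_iff.1 hcenter, map_inv, map_inv,
      mul_inv_cancel_right, mul_inv_cancel]

theorem two_pow_dvd_of_sq_and_mul_dvd {k : ℕ} {r s : ℤ} (hr : (2 ^ (k + 1) : ℤ) ∣ r * r - 1)
    (hrs : (2 ^ (k + 1) : ℤ) ∣ (r - 1) * s) (hne : ∀ j : ℤ, ¬ (2 ^ (k + 1) : ℤ) ∣ (r + 1) * j + s)
    (hs : Even s) : (2 ^ k : ℤ) ∣ r + 1 ∧ (2 ^ k : ℤ) ∣ s := by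
  have hcoprime (m : ℤ) (hm : Odd m) : IsCoprime ((2 : ℤ) ^ k) m :=
    (Int.isCoprime_two_left.2 hm).pow_left
  have hr_odd : Odd r := by
    have := (dvd_pow_self (2 : ℤ) k.succ_ne_zero).trans hr
    rw [← Int.not_even_iff_odd]
    rintro ⟨q, rfl⟩
    ring_nf at this
    lia
  obtain ⟨q, rfl⟩ := hr_odd
  obtain ⟨σ, rfl⟩ := hs
  rcases Int.even_or_odd q with hq | hq
  · obtain ⟨a, b, hab⟩ := hcoprime (q + 1) hq.add_one
    refine absurd ⟨a * σ, ?_⟩ (hne (-(b * σ)))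
    linear_combination (-2 * σ) * hab
  · rw [pow_succ'] at hr hrs
    constructor
    · refine (hcoprime q hq).dvd_of_dvd_mul_left (Int.dvd_of_mul_dvd_mul_left two_ne_zero ?_)
      exact hr.trans (dvd_of_eq (by ring))
    · refine (hcoprime q hq).dvd_of_dvd_mul_left (Int.dvd_of_mul_dvd_mul_left two_ne_zero ?_)
      exact hrs.trans (dvd_of_eq (by ring))

theorem two_pow_succ_dvd_add_one_and_sub {k : ℕ} {r s : ℤ} (hr : (2 ^ (k + 1) : ℤ) ∣ r * r - 1)
    (hrs : (2 ^ (k + 1) : ℤ) ∣ (r - 1) * s) (hne : ∀ j : ℤ, ¬ (2 ^ (k + 1) : ℤ) ∣ (r + 1) * j + s)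
    (hs : Even s) : 1 ≤ k ∧ (2 ^ (k + 1) : ℤ) ∣ r + 1 ∧ (2 ^ (k + 1) : ℤ) ∣ s - 2 ^ k := by
  obtain ⟨⟨α, hα⟩, ⟨β, rfl⟩⟩ := two_pow_dvd_of_sq_and_mul_dvd hr hrs hne hs
  have hdvd (m : ℤ) : (2 ^ (k + 1) : ℤ) ∣ 2 ^ k * m ↔ Even m := by
    rw [pow_succ, mul_dvd_mul_iff_left (pow_ne_zero k (two_ne_zero' ℤ)), even_iff_two_dvd]
  have hβ : Odd β := by
    rw [← Int.not_even_iff_odd, ← hdvd]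
    simpa only [mul_zero, zero_add] using hne 0
  have hα_even : Even α := by
    have := hne 1
    rw [mul_one, hα, ← mul_add, hdvd, Int.even_add] at this
    grind
  refine ⟨?_, hα ▸ (hdvd α).2 hα_even, ?_⟩
  · rw [Nat.one_le_iff_ne_zero]
    rintro rfl
    exact Int.not_even_iff_odd.2 hβ (by rwa [pow_zero, one_mul] at hs)
  · rw [← mul_sub_one, hdvd]
    exact hβ.sub_odd odd_one

theorem mem_zpowers_of_sq_eq_zpow {G : Type*} [Group G] {x t : G} {k : ℕ} {s : ℤ}
    (hx : orderOf x = 2 ^ k) (hs : Odd s) (ht : t ^ 2 = x ^ s) : x ∈ zpowers t := by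
  have hgcd : s.gcd (orderOf x) = 1 := by
    rw [hx, ← Int.isCoprime_iff_gcd_eq_one, Nat.cast_pow]
    exact (Int.isCoprime_two_right.2 hs).pow_right
  have hxs : x ∈ zpowers (t ^ 2) := ht ▸ mem_zpowers_zpow_iff.2 hgcd
  exact zpowers_le.2 (pow_mem (mem_zpowers t) 2) hxs

theorem conj_eq_inv_and_sq_eq_of_sq_mem_zpowers {G : Type*} [Group G] {x t : G} {k : ℕ}
    (hx : orderOf x = 2 ^ (k + 1)) (hconj : t * x * t⁻¹ ∈ zpowers x) (hsq : t ^ 2 ∈ zpowers x)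
    (hne : ∀ a ∈ zpowers x, (t * a) ^ 2 ≠ 1) (hxt : x ∉ zpowers t) :
    1 ≤ k ∧ t * x * t⁻¹ = x⁻¹ ∧ t ^ 2 = x ^ 2 ^ k := by
  obtain ⟨r, hr⟩ := mem_zpowers_iff.1 hconj
  obtain ⟨s, hs⟩ := mem_zpowers_iff.1 hsq
  have hconj_zpow (j : ℤ) : t * x ^ j * t⁻¹ = x ^ (r * j) := by rw [← conj_zpow, ← hr, zpow_mul]
  have hone (j : ℤ) : x ^ j = 1 ↔ (2 ^ (k + 1) : ℤ) ∣ j := by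
    rw [← orderOf_dvd_iff_zpow_eq_one, hx, Nat.cast_pow, Nat.cast_ofNat]
  have heq (i j : ℤ) : x ^ i = x ^ j ↔ (2 ^ (k + 1) : ℤ) ∣ i - j := by
    rw [← hone, zpow_sub, mul_inv_eq_one]
  have hs_even : Even s := by
    by_contra h
    exact hxt (mem_zpowers_of_sq_eq_zpow hx (Int.not_even_iff_odd.1 h) hs.symm)
  have hne' (j : ℤ) : ¬ (2 ^ (k + 1) : ℤ) ∣ (r + 1) * j + s := by
    rw [← hone]
    convert hne (x ^ j) (zpow_mem (mem_zpowers x) j) using 2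
    calc x ^ ((r + 1) * j + s) = x ^ (r * j) * x ^ s * x ^ j := by
          rw [← zpow_add, ← zpow_add]; ring_nf
      _ = (t * x ^ j * t⁻¹) * t ^ 2 * x ^ j := by rw [hconj_zpow, hs]
      _ = (t * x ^ j) ^ 2 := by rw [pow_two, pow_two]; group
  have hrr : (2 ^ (k + 1) : ℤ) ∣ r * r - 1 := by
    rw [← heq, zpow_one, ← hconj_zpow, hr, ← mul_assoc, ← mul_assoc, ← pow_two, mul_assoc,
      ← mul_inv_rev, ← pow_two, ← hs]
    exact (Commute.zpow_self x s).mul_inv_cancel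
  have hrs : (2 ^ (k + 1) : ℤ) ∣ (r - 1) * s := by
    rw [sub_mul, one_mul, ← heq, ← hconj_zpow, hs, pow_two, ← mul_assoc, mul_inv_cancel_right]
  obtain ⟨hk, hr1, hs1⟩ := two_pow_succ_dvd_add_one_and_sub hrr hrs hne' hs_even
  refine ⟨hk, ?_, ?_⟩
  · rwa [← hr, ← zpow_neg_one, heq, sub_neg_eq_add]
  · rwa [← hs, ← zpow_natCast x, heq, Nat.cast_pow, Nat.cast_ofNat]

section UniqueInvolution

variable {T : Type*} [Group T] {x z : T} {k : ℕ}

theorem mul_sq_ne_one_of_notMem (hz : ∀ g : T, orderOf g = 2 → g = z) (hzx : z ∈ zpowers x)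
    {t a : T} (ht : t ∉ zpowers x) (ha : a ∈ zpowers x) : (t * a) ^ 2 ≠ 1 := by
  intro h
  refine ht (((zpowers x).mul_mem_cancel_right ha).1 ?_)
  by_cases h1 : t * a = 1
  · exact h1 ▸ one_mem _
  · exact hz _ (orderOf_eq_prime h h1) ▸ hzx

theorem centralizer_le_zpowers_of_maximal [Finite T] (hT : IsPGroup 2 T)
    (hz : ∀ g : T, orderOf g = 2 → g = z) (hzx : z ∈ zpowers x) (hx : orderOf x = 2 ^ (k + 1))
    (hmax : Maximal (fun A : Subgroup T => A.Normal ∧ IsCyclic A) (zpowers x)) :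
    centralizer (zpowers x : Set T) ≤ zpowers x := by
  intro g hgx
  by_contra hg
  have : (zpowers x).Normal := hmax.prop.1
  obtain ⟨u, hu, hux, hu2, huc⟩ := exists_commute_pow_mem_of_notMem hT (zpowers x) hg hgx
  have hcomm : u * x * u⁻¹ = x := mul_inv_eq_iff_eq_mul.2 (hux x (mem_zpowers x)).symm
  by_cases hxu : x ∈ zpowers u
  · have hle : zpowers x ≤ zpowers u := zpowers_le.2 hxu
    have hnormal : (zpowers u).Normal := ⟨by
      rintro _ ⟨j, rfl⟩ h
      simp only [← conj_zpow]
      refine zpow_mem (((zpowers u).mul_mem_cancel_right (inv_mem (mem_zpowers u))).1 ?_) j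
      exact hle (huc h)⟩
    exact hu (hmax.le_of_ge ⟨hnormal, inferInstance⟩ hle (mem_zpowers u))
  · obtain ⟨hk, hinv, -⟩ := conj_eq_inv_and_sq_eq_of_sq_mem_zpowers hx
      (hcomm.symm ▸ mem_zpowers x) hu2 (fun a ha => mul_sq_ne_one_of_notMem hz hzx hu ha) hxu
    have hx2 : x ^ 2 = 1 := by rw [pow_two, ← eq_inv_iff_mul_eq_one, ← hinv, hcomm]
    have hdvd : 2 ^ (k + 1) ∣ 2 ^ 1 := hx ▸ orderOf_dvd_of_pow_eq_one hx2
    have := (Nat.pow_dvd_pow_iff_le_right (le_refl 2)).1 hdvd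
    lia

theorem not_conj_conj_eq_inv {g : T} (hx : 4 ∣ orderOf x) (hg : g * x * g⁻¹ ∈ zpowers x) :
    g ^ 2 * x * (g ^ 2)⁻¹ ≠ x⁻¹ := by
  obtain ⟨q, hq⟩ := mem_zpowers_iff.1 hg
  intro h
  have hqq : x ^ (q * q + 1) = 1 := by
    rw [zpow_add_one, ← eq_inv_iff_mul_eq_one, ← h, zpow_mul, hq, conj_zpow, hq, pow_two]
    group
  have h4 : (4 : ℤ) ∣ q * q + 1 :=
    (Int.natCast_dvd_natCast.2 hx).trans (orderOf_dvd_iff_zpow_eq_one.2 hqq)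
  rcases Int.even_or_odd' q with ⟨m, rfl | rfl⟩ <;> ring_nf at h4 <;> lia

theorem conj_eq_inv_and_sq_eq_of_notMem [Finite T] (hT : IsPGroup 2 T)
    (hz : ∀ g : T, orderOf g = 2 → g = z) (hzx : z ∈ zpowers x) (hx : orderOf x = 2 ^ (k + 1))
    (hmax : Maximal (fun A : Subgroup T => A.Normal ∧ IsCyclic A) (zpowers x)) {g : T}
    (hg : g ∉ zpowers x) : g * x * g⁻¹ = x⁻¹ ∧ g ^ 2 = x ^ 2 ^ k := by
  have hconj (t : T) : t * x * t⁻¹ ∈ zpowers x := hmax.prop.1.conj_mem x (mem_zpowers x) t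
  have hinv {t : T} (ht : t ∉ zpowers x) (ht2 : t ^ 2 ∈ zpowers x) :
      1 ≤ k ∧ t * x * t⁻¹ = x⁻¹ ∧ t ^ 2 = x ^ 2 ^ k := by
    refine conj_eq_inv_and_sq_eq_of_sq_mem_zpowers hx (hconj t) ht2
      (fun a ha => mul_sq_ne_one_of_notMem hz hzx ht ha) fun hxt => ht ?_
    obtain ⟨i, rfl⟩ := mem_zpowers_iff.1 hxt
    refine centralizer_le_zpowers_of_maximal hT hz hzx hx hmax ?_
    rw [mem_centralizer_iff]
    rintro _ ⟨j, rfl⟩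
    exact ((Commute.zpow_self t i).zpow_left j).eq
  have hsq_of_sq_sq {t : T} (ht : (t ^ 2) ^ 2 ∈ zpowers x) : t ^ 2 ∈ zpowers x := by
    by_contra hn
    obtain ⟨hk, h, -⟩ := hinv hn ht
    exact not_conj_conj_eq_inv (hx ▸ pow_dvd_pow 2 (by lia : 2 ≤ k + 1)) (hconj t) h
  have hsq (j : ℕ) : ∀ t : T, t ^ 2 ^ (j + 1) ∈ zpowers x → t ^ 2 ∈ zpowers x := by
    induction j with
    | zero => exact fun t ht => by rwa [zero_add, pow_one] at ht
    | succ j ih => exact fun t ht => hsq_of_sq_sq (ih (t ^ 2) (by rwa [← pow_mul, ← pow_succ']))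
  obtain ⟨j, hj⟩ := hT g
  exact (hinv hg (hsq j g (by rw [pow_succ, pow_mul, hj, one_pow]; exact one_mem _))).2

end UniqueInvolution

/-- `x` and `y` generate a generalized quaternion group of order `4 * n`: `x` spans a cyclic
subgroup of order `2 * n` with the two cosets `1` and `y`, the element `y` inverts `x` and
`y ^ 2 = x ^ n`. For `n = 1` the group is cyclic of order `4`. -/
structure IsQuaternionPair {G : Type*} [Group G] (x y : G) (n : ℕ) : Prop where
  orderOf_eq : orderOf x = 2 * n
  sq_eq : y ^ 2 = x ^ n
  mul_mul_eq : x * y * x = y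
  notMem : y ∉ zpowers x
  mem_or_mem : ∀ g, g ∈ zpowers x ∨ y⁻¹ * g ∈ zpowers x

theorem isQuaternionPair_of_conj_eq_inv {G : Type*} [Group G] {x y : G} {n : ℕ}
    (horder : orderOf x = 2 * n) (hcent : centralizer (zpowers x : Set G) ≤ zpowers x)
    (h : ∀ g ∉ zpowers x, g * x * g⁻¹ = x⁻¹ ∧ g ^ 2 = x ^ n) (hy : y ∉ zpowers x) :
    IsQuaternionPair x y n where
  orderOf_eq := horder
  sq_eq := (h y hy).2
  mul_mul_eq := by rw [mul_assoc, mul_inv_eq_iff_eq_mul.1 (h y hy).1, mul_inv_cancel_left]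
  notMem := hy
  mem_or_mem g := by
    refine or_iff_not_imp_left.2 fun hg => hcent (mem_centralizer_iff.2 ?_)
    have hcomm : Commute x (y⁻¹ * g) := (mul_inv_eq_iff_eq_mul.1 <| calc
      (y⁻¹ * g) * x * (y⁻¹ * g)⁻¹ = y⁻¹ * (g * x * g⁻¹) * y := by group
      _ = y⁻¹ * (y * x * y⁻¹) * y := by rw [(h g hg).1, (h y hy).1]
      _ = x := by group).symm
    rintro _ ⟨j, rfl⟩
    exact (hcomm.zpow_left j).eq

theorem normal_zpowers_of_existsUnique_orderOf_eq {G : Type*} [Group G] {n : ℕ}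
    (huniq : ∃! g : G, orderOf g = n) {z : G} (hz : orderOf z = n) :
    (zpowers z).Normal where
  conj_mem := by
    rintro _ ⟨i, rfl⟩ g
    have hconj : MulAut.conj g z = z :=
      huniq.unique (((MulAut.conj g).orderOf_eq z).trans hz) hz
    exact ⟨i, (hconj ▸ map_zpow (MulAut.conj g) z i).symm⟩

theorem isCyclic_or_exists_isQuaternionPair {T : Type*} [Group T] [Finite T]
    (hT : IsPGroup 2 T) (huniq : ∃! g : T, orderOf g = 2) :
    IsCyclic T ∨ ∃ (x y : T) (n : ℕ), IsQuaternionPair x y n := by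
  obtain ⟨z, hz⟩ := huniq.exists
  have hz_uniq (g : T) (hg : orderOf g = 2) : g = z := huniq.unique hg hz
  obtain ⟨A, hzA, hmax⟩ := Finite.exists_le_maximal
    (p := fun A : Subgroup T => A.Normal ∧ IsCyclic A)
    ⟨normal_zpowers_of_existsUnique_orderOf_eq huniq hz, inferInstance⟩
  obtain ⟨x, rfl⟩ := (A.isCyclic_iff_exists_zpowers_eq_top).1 hmax.prop.2
  have hzx : z ∈ zpowers x := zpowers_le.1 hzA
  obtain ⟨k, hk⟩ : ∃ k, orderOf x = 2 ^ (k + 1) := by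
    obtain ⟨k, hk⟩ := IsPGroup.iff_orderOf.1 hT x
    obtain ⟨j, rfl⟩ := Nat.exists_eq_succ_of_ne_zero (n := k) (by
      rintro rfl
      have := hz ▸ orderOf_dvd_of_mem_zpowers hzx
      rw [hk] at this
      norm_num at this)
    exact ⟨j, hk⟩
  rw [or_iff_not_imp_left]
  intro hcyclic
  obtain ⟨y, hy⟩ : ∃ y, y ∉ zpowers x := by
    by_contra! h
    exact hcyclic ⟨x, h⟩
  exact ⟨x, y, 2 ^ k, isQuaternionPair_of_conj_eq_inv (by rw [hk, pow_succ'])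
    (centralizer_le_zpowers_of_maximal hT hz_uniq hzx hk hmax)
    (fun g hg => conj_eq_inv_and_sq_eq_of_notMem hT hz_uniq hzx hk hmax hg) hy⟩

end Classification

section QuaternionComplex

open Finset

/-- The relations `x ^ (2 * n) = 1`, `y ^ 2 = x ^ n` and `x * y * x = y` of the generalized
quaternion group of order `4 * n`, in an arbitrary monoid. -/
structure QuaternionRelations {R : Type*} [Monoid R] (x y : R) (n : ℕ) : Prop where
  pow_eq_one : x ^ (2 * n) = 1
  sq_eq : y ^ 2 = x ^ n
  mul_mul_eq : x * y * x = y

namespace QuaternionRelations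

theorem map {R S : Type*} [Monoid R] [Monoid S] {x y : R} {n : ℕ}
    (h : QuaternionRelations x y n) (φ : R →* S) : QuaternionRelations (φ x) (φ y) n where
  pow_eq_one := by rw [← map_pow, h.pow_eq_one, map_one]
  sq_eq := by rw [← map_pow, h.sq_eq, map_pow]
  mul_mul_eq := by rw [← map_mul, ← map_mul, h.mul_mul_eq]

section Monoid

variable {R : Type*} [Monoid R] {x y : R} {n : ℕ}

theorem pow_mul_mul_pow (h : QuaternionRelations x y n) (i : ℕ) : x ^ i * y * x ^ i = y := by
  induction i with
  | zero => rw [pow_zero, one_mul, mul_one]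
  | succ i ih =>
    calc x ^ (i + 1) * y * x ^ (i + 1) = x ^ i * (x * y * x) * x ^ i := by
          nth_rw 2 [pow_succ']; rw [pow_succ]; simp only [mul_assoc]
      _ = y := by rw [h.mul_mul_eq, ih]

theorem pow_mul_eq (h : QuaternionRelations x y n) {i : ℕ} (hi : i ≤ 2 * n) :
    x ^ i * y = y * x ^ (2 * n - i) := by
  calc x ^ i * y = x ^ i * y * x ^ i * x ^ (2 * n - i) := by
        rw [mul_assoc _ (x ^ i), ← pow_add, Nat.add_sub_cancel' hi, h.pow_eq_one, mul_one]
    _ = y * x ^ (2 * n - i) := by rw [h.pow_mul_mul_pow]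

theorem mul_self_eq (h : QuaternionRelations x y n) : y * y = x ^ n := by rw [← pow_two, h.sq_eq]

end Monoid

variable {R : Type*} [Ring R] {x y : R} {n : ℕ}

theorem mul_geom_sum (h : QuaternionRelations x y n) :
    x * ∑ i ∈ range (2 * n), x ^ i = ∑ i ∈ range (2 * n), x ^ i := by
  rw [← sub_eq_zero, ← sub_one_mul, _root_.mul_geom_sum, h.pow_eq_one, sub_self]

theorem geom_sum_mul (h : QuaternionRelations x y n) :
    (∑ i ∈ range (2 * n), x ^ i) * x = ∑ i ∈ range (2 * n), x ^ i := by
  rw [← sub_eq_zero, ← mul_sub_one, _root_.geom_sum_mul, h.pow_eq_one, sub_self]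

theorem geom_sum_mul_right (h : QuaternionRelations x y n) :
    (∑ i ∈ range (2 * n), x ^ i) * y = y * ∑ i ∈ range (2 * n), x ^ i := by
  calc (∑ i ∈ range (2 * n), x ^ i) * y = ∑ i ∈ range (2 * n), y * x ^ (2 * n - 1 - i + 1) := by
        rw [sum_mul]
        refine sum_congr rfl fun i hi => ?_
        have := mem_range.1 hi
        rw [h.pow_mul_eq this.le]
        congr 2
        lia
    _ = y * ((∑ i ∈ range (2 * n), x ^ i) * x) := by
        rw [sum_range_reflect (fun i => y * x ^ (i + 1)), ← mul_sum, sum_mul]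
        simp only [pow_succ]
    _ = y * ∑ i ∈ range (2 * n), x ^ i := by rw [h.geom_sum_mul]

theorem half_geom_sum_mul (h : QuaternionRelations x y n) :
    (∑ i ∈ range n, x ^ i) * (x * y) = y * x ^ n * ∑ i ∈ range n, x ^ i := by
  calc (∑ i ∈ range n, x ^ i) * (x * y) = ∑ i ∈ range n, y * x ^ n * x ^ (n - 1 - i) := by
        rw [sum_mul]
        refine sum_congr rfl fun i hi => ?_
        have := mem_range.1 hi
        rw [← mul_assoc, ← pow_succ, h.pow_mul_eq (by lia), mul_assoc y, ← pow_add]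
        congr 2
        lia
    _ = y * x ^ n * ∑ i ∈ range n, x ^ i := by
        rw [sum_range_reflect (fun i => y * x ^ n * x ^ i), mul_sum]

theorem half_geom_sum_mul_add (h : QuaternionRelations x y n) :
    (∑ i ∈ range n, x ^ i) * (x * y) + y * ∑ i ∈ range n, x ^ i =
      y * ∑ i ∈ range (2 * n), x ^ i := by
  rw [h.half_geom_sum_mul, two_mul, sum_range_add]
  simp only [pow_add, ← mul_sum]
  rw [mul_add, mul_assoc, add_comm]

theorem geom_sum_mul_mul (h : QuaternionRelations x y n) :
    (∑ i ∈ range (2 * n), x ^ i) * (x * y) = y * ∑ i ∈ range (2 * n), x ^ i := by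
  rw [← mul_assoc, h.geom_sum_mul, h.geom_sum_mul_right]

end QuaternionRelations

variable {k M : Type*} [CommRing k] [AddCommGroup M] [Module k M]

/-- The first differential of the complex `M → M × M → M × M → M` attached to two endomorphisms
satisfying the quaternion relations. Applied to functions on the group, this is the dual of the
beginning of the free resolution coming from the presentation `x ^ n = y ^ 2`, `x * y * x = y`. -/
def quaternionD₀ (X Y : Module.End k M) : M →ₗ[k] M × M :=
  (X - 1).prod (Y - 1)

/-- The second differential of the quaternion complex: the Fox derivatives of the two relators. -/
def quaternionD₁ (X Y : Module.End k M) (n : ℕ) : M × M →ₗ[k] M × M :=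
  ((∑ i ∈ range n, X ^ i).coprod (-(Y + 1))).prod ((X * Y + 1).coprod (X - 1))

/-- The third differential of the quaternion complex. -/
def quaternionD₂ (X Y : Module.End k M) : M × M →ₗ[k] M :=
  (X - 1).coprod (1 - X * Y)

/-- The cohomological triviality, for the cyclic group generated by `X` and for the action of `Y`
on the `X`-invariants, which makes the quaternion complex exact. -/
structure IsQuaternionAcyclic (X Y : Module.End k M) (n : ℕ) : Prop where
  exists_of_geom_sum_eq_zero : ∀ v, (∑ i ∈ range (2 * n), X ^ i) v = 0 → ∃ w, X w - w = v
  exists_of_fixed : ∀ v, X v = v → ∃ w, (∑ i ∈ range (2 * n), X ^ i) w = v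
  exists_of_fixed_of_neg : ∀ v, X v = v → Y v = -v → ∃ w, X w = w ∧ Y w - w = v
  exists_of_fixed_of_fixed : ∀ v, X v = v → Y v = v → ∃ w, X w = w ∧ Y w + w = v

section Exactness

variable {X Y : Module.End k M} {n : ℕ}

theorem quaternionD₀_apply (v : M) : quaternionD₀ X Y v = (X v - v, Y v - v) := rfl

theorem quaternionD₁_apply (b b' : M) : quaternionD₁ X Y n (b, b') =
    ((∑ i ∈ range n, X ^ i) b - (Y b' + b'), X (Y b) + b + (X b' - b')) := by
  rw [sub_eq_add_neg _ (Y b' + b')]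
  rfl

theorem quaternionD₂_apply (c c' : M) :
    quaternionD₂ X Y (c, c') = X c - c + (c' - X (Y c')) := rfl

namespace QuaternionRelations

theorem half_geom_sum_apply_sub (h : QuaternionRelations X Y n) (v : M) :
    (∑ i ∈ range n, X ^ i) (X v - v) = Y (Y v) - v :=
  LinearMap.congr_fun (((_root_.geom_sum_mul X n).trans (congrArg (· - 1) h.mul_self_eq.symm)) :
    (∑ i ∈ range n, X ^ i) * (X - 1) = Y * Y - 1) v

theorem sub_half_geom_sum_apply (h : QuaternionRelations X Y n) (v : M) :
    X ((∑ i ∈ range n, X ^ i) v) - (∑ i ∈ range n, X ^ i) v = Y (Y v) - v :=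
  LinearMap.congr_fun (((_root_.mul_geom_sum X n).trans (congrArg (· - 1) h.mul_self_eq.symm)) :
    (X - 1) * (∑ i ∈ range n, X ^ i) = Y * Y - 1) v

theorem apply_apply_apply (h : QuaternionRelations X Y n) (v : M) :
    X (Y (X v)) = Y v :=
  LinearMap.congr_fun h.mul_mul_eq v

theorem half_geom_sum_apply_add (h : QuaternionRelations X Y n) (v : M) :
    (∑ i ∈ range n, X ^ i) (X (Y v)) + Y ((∑ i ∈ range n, X ^ i) v) =
      Y ((∑ i ∈ range (2 * n), X ^ i) v) :=
  LinearMap.congr_fun h.half_geom_sum_mul_add v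

theorem geom_sum_apply_apply (h : QuaternionRelations X Y n) (v : M) :
    (∑ i ∈ range (2 * n), X ^ i) (X (Y v)) = Y ((∑ i ∈ range (2 * n), X ^ i) v) :=
  LinearMap.congr_fun h.geom_sum_mul_mul v

theorem geom_sum_apply_sub (h : QuaternionRelations X Y n) (v : M) :
    (∑ i ∈ range (2 * n), X ^ i) (X v - v) = 0 := by
  rw [map_sub, sub_eq_zero]
  exact LinearMap.congr_fun h.geom_sum_mul v

theorem apply_geom_sum (h : QuaternionRelations X Y n) (v : M) :
    X ((∑ i ∈ range (2 * n), X ^ i) v) = (∑ i ∈ range (2 * n), X ^ i) v :=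
  LinearMap.congr_fun h.mul_geom_sum v

theorem pow_four_apply (h : QuaternionRelations X Y n) (v : M) : Y (Y (Y (Y v))) = v := by
  have : Y ^ 4 = 1 := by
    rw [show 4 = 2 * 2 from rfl, pow_mul, h.sq_eq, ← pow_mul, mul_comm, h.pow_eq_one]
  exact LinearMap.congr_fun this v

end QuaternionRelations

theorem quaternionD₁_quaternionD₀ (h : QuaternionRelations X Y n) (v : M) :
    quaternionD₁ X Y n (quaternionD₀ X Y v) = 0 := by
  rw [quaternionD₀_apply, quaternionD₁_apply, h.half_geom_sum_apply_sub, Prod.mk_eq_zero]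
  simp only [map_sub, h.apply_apply_apply]
  constructor <;> abel

theorem quaternionD₂_quaternionD₁ (h : QuaternionRelations X Y n) (v : M × M) :
    quaternionD₂ X Y (quaternionD₁ X Y n v) = 0 := by
  have hN := h.sub_half_geom_sum_apply v.1
  rw [quaternionD₁_apply, quaternionD₂_apply]
  simp only [map_sub, map_add, h.apply_apply_apply]
  linear_combination (norm := module) hN

theorem exact_quaternionD₀_quaternionD₁ (h : QuaternionRelations X Y n)
    (hXY : IsQuaternionAcyclic X Y n) :
    Function.Exact (quaternionD₀ X Y) (quaternionD₁ X Y n) := by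
  refine fun v => ⟨fun hv => ?_, ?_⟩
  · obtain ⟨b, b'⟩ := v
    obtain ⟨h₁, h₂⟩ := Prod.mk_eq_zero.1 ((quaternionD₁_apply b b').symm.trans hv)
    have hYLb : Y ((∑ i ∈ range (2 * n), X ^ i) b) = 0 := by
      have hY := congrArg Y h₁
      have hN : (∑ i ∈ range n, X ^ i) (X (Y b) + b + (X b' - b')) = 0 := by rw [h₂, map_zero]
      have hNb' := h.half_geom_sum_apply_sub b'
      rw [← h.half_geom_sum_apply_add]
      simp only [map_sub, map_add, map_zero] at hY hN hNb' ⊢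
      linear_combination (norm := module) hY - h₁ + hN - hNb'
    have hLb : (∑ i ∈ range (2 * n), X ^ i) b = 0 := by
      rw [← h.pow_four_apply ((∑ i ∈ range (2 * n), X ^ i) b), hYLb, map_zero, map_zero, map_zero]
    obtain ⟨f, rfl⟩ := hXY.exists_of_geom_sum_eq_zero b hLb
    have hf := quaternionD₁_quaternionD₀ h f
    rw [quaternionD₀_apply, quaternionD₁_apply, Prod.mk_eq_zero] at hf
    obtain ⟨h₁', h₂'⟩ := hf
    obtain ⟨w, hw, hwb⟩ := hXY.exists_of_fixed_of_neg (b' - (Y f - f))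
      (by rw [map_sub]; linear_combination (norm := module) h₂ - h₂')
      (by rw [map_sub]; linear_combination (norm := module) h₁' - h₁)
    refine ⟨f + w, ?_⟩
    rw [quaternionD₀_apply, Prod.mk.injEq, map_add, map_add, hw]
    exact ⟨by abel, by linear_combination (norm := module) hwb⟩
  · rintro ⟨f, rfl⟩
    exact quaternionD₁_quaternionD₀ h f

theorem exists_quaternionD₁_eq_zero_right (h : QuaternionRelations X Y n)
    (hXY : IsQuaternionAcyclic X Y n) {c : M} (hc : X c = c) :
    ∃ v, quaternionD₁ X Y n v = (c, 0) := by
  obtain ⟨c₀, rfl⟩ := hXY.exists_of_fixed c hc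
  let d := Y (Y (Y c₀))
  have hYd : Y d = c₀ := h.pow_four_apply c₀
  have hN := h.sub_half_geom_sum_apply d
  have hL := h.half_geom_sum_apply_add d
  have hLd := LinearMap.congr_fun h.geom_sum_mul_right d
  simp only [Module.End.mul_apply, hYd] at hLd
  refine ⟨(X (Y d) - d, -(∑ i ∈ range n, X ^ i) d), ?_⟩
  rw [quaternionD₁_apply, Prod.mk.injEq]
  simp only [map_sub, map_neg, h.apply_apply_apply]
  constructor
  · linear_combination (norm := module) hL - hLd
  · linear_combination (norm := module) -hN

theorem exact_quaternionD₁_quaternionD₂ (h : QuaternionRelations X Y n)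
    (hXY : IsQuaternionAcyclic X Y n) :
    Function.Exact (quaternionD₁ X Y n) (quaternionD₂ X Y) := by
  refine fun v => ⟨fun hv => ?_, ?_⟩
  · obtain ⟨c, c'⟩ := v
    rw [quaternionD₂_apply] at hv
    have hYL : Y ((∑ i ∈ range (2 * n), X ^ i) c') = (∑ i ∈ range (2 * n), X ^ i) c' := by
      have hL : (∑ i ∈ range (2 * n), X ^ i) (X c - c + (c' - X (Y c'))) = 0 := by
        rw [hv, map_zero]
      rw [map_add, h.geom_sum_apply_sub, map_sub, h.geom_sum_apply_apply] at hL
      linear_combination (norm := module) -hL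
    obtain ⟨φ, hφ, hφc⟩ := hXY.exists_of_fixed_of_fixed _ (h.apply_geom_sum c') hYL
    obtain ⟨b₀, rfl⟩ := hXY.exists_of_fixed φ hφ
    obtain ⟨b₁, hb₁⟩ := hXY.exists_of_geom_sum_eq_zero (c' - (X (Y b₀) + b₀)) (by
      rw [map_sub, map_add, h.geom_sum_apply_apply, hφc, sub_self])
    have hd := quaternionD₂_quaternionD₁ h (b₀, b₁)
    rw [quaternionD₁_apply, show X (Y b₀) + b₀ + (X b₁ - b₁) = c' by rw [hb₁]; abel,
      quaternionD₂_apply] at hd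
    obtain ⟨v, hv'⟩ := exists_quaternionD₁_eq_zero_right h hXY
      (c := c - ((∑ i ∈ range n, X ^ i) b₀ - (Y b₁ + b₁)))
      (by rw [map_sub]; linear_combination (norm := module) hv - hd)
    refine ⟨(b₀, b₁) + v, ?_⟩
    rw [map_add, hv', quaternionD₁_apply, Prod.mk_add_mk, Prod.mk.injEq]
    exact ⟨by abel, by rw [hb₁]; abel⟩
  · rintro ⟨w, rfl⟩
    exact quaternionD₂_quaternionD₁ h w

theorem mem_range_quaternionD₂_iff (h : QuaternionRelations X Y n)
    (hXY : IsQuaternionAcyclic X Y n) (f : M) : f ∈ Set.range (quaternionD₂ X Y) ↔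
      Y ((∑ i ∈ range (2 * n), X ^ i) f) = -(∑ i ∈ range (2 * n), X ^ i) f := by
  constructor
  · rintro ⟨⟨c, c'⟩, rfl⟩
    have hY (v : M) (hv : X v = v) : Y (Y v) = v := by
      rw [← sub_eq_zero, ← h.half_geom_sum_apply_sub, hv, sub_self, map_zero]
    rw [quaternionD₂_apply, map_add, h.geom_sum_apply_sub, zero_add, map_sub,
      h.geom_sum_apply_apply, map_sub, hY _ (h.apply_geom_sum c')]
    abel
  · intro hf
    obtain ⟨φ, hφ, hφf⟩ := hXY.exists_of_fixed_of_neg _ (h.apply_geom_sum f) hf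
    obtain ⟨c, rfl⟩ := hXY.exists_of_fixed φ hφ
    obtain ⟨w, hw⟩ := hXY.exists_of_geom_sum_eq_zero (f + (c - X (Y c))) (by
      rw [map_add, map_sub, h.geom_sum_apply_apply, ← hφf]; abel)
    refine ⟨(w, -c), ?_⟩
    rw [quaternionD₂_apply, hw, map_neg, map_neg]
    abel

end Exactness

section Commute

variable {X Y a : Module.End k M}

theorem quaternionD₀_comp (hX : Commute X a) (hY : Commute Y a) :
    quaternionD₀ X Y ∘ₗ a = a.prodMap a ∘ₗ quaternionD₀ X Y := by
  have h (b : Module.End k M) (hb : Commute b a) (v : M) : (b - 1) (a v) = a ((b - 1) v) :=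
    LinearMap.congr_fun (hb.sub_left (Commute.one_left a)).eq v
  exact LinearMap.ext fun v => Prod.ext (h X hX v) (h Y hY v)

theorem coprod_comp_prodMap_of_commute {P Q : Module.End k M} (hP : Commute P a)
    (hQ : Commute Q a) : P.coprod Q ∘ₗ a.prodMap a = a ∘ₗ P.coprod Q := by
  refine LinearMap.ext fun v => ?_
  exact (congrArg₂ (· + ·) (LinearMap.congr_fun hP.eq v.1) (LinearMap.congr_fun hQ.eq v.2)).trans
    (map_add a _ _).symm

theorem quaternionD₁_comp (n : ℕ) (hX : Commute X a) (hY : Commute Y a) :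
    quaternionD₁ X Y n ∘ₗ a.prodMap a = a.prodMap a ∘ₗ quaternionD₁ X Y n := by
  have h₁ := coprod_comp_prodMap_of_commute
    (Commute.sum_left (range n) (X ^ ·) a fun i _ => hX.pow_left i)
    (hY.add_left (Commute.one_left a)).neg_left
  have h₂ := coprod_comp_prodMap_of_commute
    ((hX.mul_left hY).add_left (Commute.one_left a)) (hX.sub_left (Commute.one_left a))
  exact LinearMap.ext fun v => Prod.ext (LinearMap.congr_fun h₁ v) (LinearMap.congr_fun h₂ v)

theorem quaternionD₂_comp (hX : Commute X a) (hY : Commute Y a) :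
    quaternionD₂ X Y ∘ₗ a.prodMap a = a ∘ₗ quaternionD₂ X Y :=
  coprod_comp_prodMap_of_commute (hX.sub_left (Commute.one_left a))
    ((Commute.one_left a).sub_left (hX.mul_left hY))

end Commute

end QuaternionComplex

section DimensionShift

open CategoryTheory

universe u

variable {k G : Type u} [CommRing k] [Group G]

/-- The image of a morphism of representations. -/
noncomputable abbrev rangeRep {A B : Rep.{u} k G} (f : A ⟶ B) : Rep.{u} k G :=
  B.subrepresentation (LinearMap.range f.hom.toLinearMap) (by
    rintro g _ ⟨a, rfl⟩
    exact ⟨A.ρ g a, Rep.hom_comm_apply f g a⟩)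

/-- A morphism of representations, with its codomain restricted to its image. -/
noncomputable def toRangeRep {A B : Rep.{u} k G} (f : A ⟶ B) : A ⟶ rangeRep f :=
  Rep.ofHom ⟨f.hom.toLinearMap.rangeRestrict, fun g => by
    ext a
    exact Rep.hom_comm_apply f g a⟩

theorem toRangeRep_surjective {A B : Rep.{u} k G} (f : A ⟶ B) :
    Function.Surjective (toRangeRep f).hom :=
  f.hom.toLinearMap.surjective_rangeRestrict

theorem comp_toRangeRep_eq_zero {A B C : Rep.{u} k G} {i : A ⟶ B} {d : B ⟶ C}
    (h : Function.Exact i.hom d.hom) : i ≫ toRangeRep d = 0 :=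
  Rep.hom_ext (Representation.IntertwiningMap.ext (LinearMap.ext fun a =>
    Subtype.ext (h.apply_apply_eq_zero a)))

theorem shortExact_toRangeRep {A B C : Rep.{u} k G} {i : A ⟶ B} {d : B ⟶ C}
    (hi : Function.Injective i.hom) (h : Function.Exact i.hom d.hom) :
    (ShortComplex.mk i (toRangeRep d) (comp_toRangeRep_eq_zero h)).ShortExact where
  exact := by
    rw [← ShortComplex.exact_map_iff_of_faithful _ (forget₂ (Rep k G) (ModuleCat k)),
      ShortComplex.moduleCat_exact_iff]
    exact fun b hb => (h b).1 (congrArg Subtype.val hb)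
  mono_f := (Rep.mono_iff_injective _).2 hi
  epi_g := (Rep.epi_iff_surjective _).2 (toRangeRep_surjective d)

theorem exact_subtype_rangeRep {A B C : Rep.{u} k G} {i : A ⟶ B} {d : B ⟶ C}
    (h : Function.Exact i.hom d.hom) :
    Function.Exact (B.subtype _ _ : rangeRep i ⟶ B).hom d.hom :=
  fun b => (h b).trans ⟨fun ⟨a, ha⟩ => ⟨⟨b, a, ha⟩, rfl⟩, fun ⟨⟨_, a, ha⟩, hb⟩ => ⟨a, ha.trans hb⟩⟩

theorem shortExact_subtype_rangeRep {A B C : Rep.{u} k G} {i : A ⟶ B} {d : B ⟶ C}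
    (h : Function.Exact i.hom d.hom) : (ShortComplex.mk (B.subtype _ _ : rangeRep i ⟶ B)
      (toRangeRep d) (comp_toRangeRep_eq_zero (exact_subtype_rangeRep h))).ShortExact :=
  shortExact_toRangeRep Subtype.val_injective (exact_subtype_rangeRep h)

open groupCohomology Limits in
theorem nonempty_groupCohomology_three_linearEquiv_invariants {A J₀ J₁ J₂ J₃ : Rep.{u} k G}
    {i : A ⟶ J₀} {d₀ : J₀ ⟶ J₁} {d₁ : J₁ ⟶ J₂} {d₂ : J₂ ⟶ J₃} (hi : Function.Injective i.hom)
    (h₀ : Function.Exact i.hom d₀.hom) (h₁ : Function.Exact d₀.hom d₁.hom)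
    (h₂ : Function.Exact d₁.hom d₂.hom)
    (hJ₀ : ∀ n, IsZero (groupCohomology J₀ (n + 1)))
    (hJ₁ : ∀ n, IsZero (groupCohomology J₁ (n + 1)))
    (hJ₂ : ∀ n, IsZero (groupCohomology J₂ (n + 1)))
    (hinv : ∀ v ∈ J₂.ρ.invariants, d₂.hom v = 0) :
    Nonempty (groupCohomology A 3 ≃ₗ[k] (rangeRep d₂).ρ.invariants) := by
  have e₀ := shortExact_toRangeRep hi h₀
  have e₁ := shortExact_subtype_rangeRep h₁
  have e₂ := shortExact_subtype_rangeRep h₂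
  have := isIso_δ_of_isZero e₀ 2 (hJ₀ 1) (hJ₀ 2)
  have := isIso_δ_of_isZero e₁ 1 (hJ₁ 0) (hJ₁ 1)
  have := epi_δ_of_isZero e₂ 0 (hJ₂ 0)
  have hzero : groupCohomology.map (MonoidHom.id G) (toRangeRep d₂) 0 = 0 := by
    rw [← cancel_mono (H0Iso _).hom, map_id_comp_H0Iso_hom, zero_comp]
    have : (Rep.invariantsFunctor k G).map (toRangeRep d₂) = 0 :=
      ModuleCat.hom_ext (LinearMap.ext fun v => Subtype.ext (Subtype.ext (hinv v.1 v.2)))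
    rw [this, comp_zero]
  have : Mono (δ e₂ 0 1 rfl) := (mapShortComplex₃_exact e₂ rfl).mono_g hzero
  have := isIso_of_mono_of_epi (δ e₂ 0 1 rfl)
  exact ⟨((asIso (δ e₀ 2 3 rfl)).symm ≪≫ (asIso (δ e₁ 1 2 rfl)).symm ≪≫
    (asIso (δ e₂ 0 1 rfl)).symm ≪≫ H0Iso _).toLinearEquiv⟩

end DimensionShift

section FunctionRepresentation

open CategoryTheory

/-- The permutation representation of `G` on the `A`-valued functions on a `G`-set `Ω`. -/
def functionRepresentation (k G Ω A : Type*) [CommRing k] [Group G] [MulAction G Ω]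
    [AddCommGroup A] [Module k A] : Representation k G (Ω → A) where
  toFun g := LinearMap.funLeft k A (g⁻¹ • ·)
  map_one' := by
    ext
    simp [LinearMap.funLeft_apply]
  map_mul' _ _ := by
    ext
    simp [LinearMap.funLeft_apply, mul_smul]

theorem functionRepresentation_apply {k G Ω A : Type*} [CommRing k] [Group G] [MulAction G Ω]
    [AddCommGroup A] [Module k A] (g : G) (f : Ω → A) (ω : Ω) :
    functionRepresentation k G Ω A g f ω = f (g⁻¹ • ω) := rfl

theorem eq_const_of_mem_invariants_functionRepresentation {k G A : Type*} [CommRing k] [Group G]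
    [AddCommGroup A] [Module k A] {f : G → A}
    (hf : f ∈ (functionRepresentation k G G A).invariants) : f = Function.const G (f 1) := by
  funext g
  rw [← congrFun (hf g) g, functionRepresentation_apply, smul_eq_mul, inv_mul_cancel,
    Function.const_apply]

/-- The inclusion of the constant functions. -/
def constIntertwiningMap (k G Ω A : Type*) [CommRing k] [Group G] [MulAction G Ω]
    [AddCommGroup A] [Module k A] :
    (Representation.trivial k G A).IntertwiningMap (functionRepresentation k G Ω A) :=
  ⟨LinearMap.pi fun _ => LinearMap.id, fun _ => rfl⟩

universe u

variable (k G : Type u) {Ω : Type u} [CommRing k] [Group G] [MulAction G Ω]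
  (A : Type u) [AddCommGroup A] [Module k A]

/-- The functions on a transitive `G`-set `Ω` are coinduced from the stabilizer of a point `ω`:
the function `f` corresponds to `g ↦ f (g⁻¹ • ω)`. -/
def functionToCoind (ω : Ω) : (functionRepresentation k G Ω A).IntertwiningMap
    (Representation.coind (MulAction.stabilizer G ω).subtype (Representation.trivial k _ A)) where
  toFun f := ⟨fun g => f (g⁻¹ • ω), fun s g => by
    change f ((s.1 * g)⁻¹ • ω) = f (g⁻¹ • ω)
    rw [mul_inv_rev, mul_smul, MulAction.mem_stabilizer_iff.1 (inv_mem s.2)]⟩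
  map_add' _ _ := rfl
  map_smul' _ _ := rfl
  isIntertwining' g := by
    refine LinearMap.ext fun f => Subtype.ext (funext fun h => ?_)
    change f (g⁻¹ • h⁻¹ • ω) = f ((h * g)⁻¹ • ω)
    rw [mul_inv_rev, mul_smul]

theorem functionToCoind_bijective [MulAction.IsPretransitive G Ω] (ω : Ω) :
    Function.Bijective (functionToCoind k G A ω : _ → _) := by
  choose g hg using MulAction.exists_smul_eq G ω
  refine ⟨fun f f' h => funext fun ω' => ?_,
    fun φ => ⟨fun ω' => φ.1 (g ω')⁻¹, Subtype.ext (funext fun h => ?_)⟩⟩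
  · have h₁ : f ((g ω')⁻¹⁻¹ • ω) = f' ((g ω')⁻¹⁻¹ • ω) := congrFun (congrArg Subtype.val h) (g ω')⁻¹
    rwa [inv_inv, hg] at h₁
  · have hs : (g (h⁻¹ • ω))⁻¹ * h⁻¹ ∈ MulAction.stabilizer G ω := by
      rw [MulAction.mem_stabilizer_iff, mul_smul, inv_smul_eq_iff, hg]
    have h₁ : φ.1 ((g (h⁻¹ • ω))⁻¹ * h⁻¹ * h) = φ.1 h := φ.2 ⟨_, hs⟩ h
    rwa [inv_mul_cancel_right] at h₁

theorem nonempty_groupCohomology_function_iso [MulAction.IsPretransitive G Ω] {S : Subgroup G}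
    {ω : Ω} (hS : MulAction.stabilizer G ω = S) (n : ℕ) :
    Nonempty (groupCohomology (Rep.of (functionRepresentation k G Ω A)) n ≅
      groupCohomology (Rep.trivial k S A) n) := by
  subst hS
  exact ⟨(groupCohomology.functor k G n).mapIso (Rep.mkIso (.mk (.ofBijective
    (functionToCoind k G A ω).toLinearMap (functionToCoind_bijective k G A ω))
    (functionToCoind k G A ω).isIntertwining')) ≪≫
      groupCohomology.coindIso (Rep.trivial k _ A) n⟩

theorem isZero_groupCohomology_function (n : ℕ) :
    Limits.IsZero (groupCohomology (Rep.of (functionRepresentation k G G A)) (n + 1)) := by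
  have hS : MulAction.stabilizer G (1 : G) = ⊥ := by
    simp
  obtain ⟨e⟩ := nonempty_groupCohomology_function_iso k G A hS (n + 1)
  exact (isZero_groupCohomology_succ_of_subsingleton _ n).of_iso e

theorem isZero_groupCohomology_function_prod (n : ℕ) :
    Limits.IsZero (groupCohomology (Rep.of ((functionRepresentation k G G A).prod
      (functionRepresentation k G G A))) (n + 1)) :=
  (isZero_groupCohomology_function k G (A × A) n).of_iso
    ((groupCohomology.functor k G (n + 1)).mapIso (Rep.mkIso (.mk
      (σ := functionRepresentation k G G (A × A))
      { toFun f g := (f.1 g, f.2 g)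
        invFun f := (fun g => (f g).1, fun g => (f g).2)
        map_add' _ _ := rfl
        map_smul' _ _ := rfl } fun _ => rfl)))

end FunctionRepresentation

section RightTranslation

open Finset

section Averaging

variable {k M : Type*} [CommRing k] [AddCommGroup M] [Module k M] {X E : Module.End k M} {m : ℕ}

/-- When `X ^ m = 1`, the hypothesis `hE` is Higman's criterion for relative projectivity: the
identity is the norm of `E` under conjugation by the powers of `X`. -/
theorem geom_sum_apply_of_fixed (hE : ∑ i ∈ range m, X ^ i * E * X ^ (m - i) = 1) {v : M}
    (hv : X v = v) : (∑ i ∈ range m, X ^ i) (E v) = v := by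
  have hpow (j : ℕ) : (X ^ j) v = v := by
    rw [Module.End.coe_pow]
    exact Function.IsFixedPt.iterate hv j
  calc (∑ i ∈ range m, X ^ i) (E v) = (∑ i ∈ range m, X ^ i * E * X ^ (m - i)) v := by
        simp only [LinearMap.sum_apply, Module.End.mul_apply, hpow]
    _ = v := by rw [hE, Module.End.one_apply]

theorem exists_sub_eq_of_geom_sum_eq_zero
    (hE : ∑ i ∈ range m, X ^ i * E * X ^ (m - i) = 1) {v : M}
    (hv : (∑ i ∈ range m, X ^ i) v = 0) : ∃ w, X w - w = v := by
  have hsum : ∑ i ∈ range m, (X ^ (m - i)) v = 0 := by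
    calc ∑ i ∈ range m, (X ^ (m - i)) v = ∑ i ∈ range m, (X ^ (m - 1 - i + 1)) v :=
          sum_congr rfl fun i hi => by rw [show m - i = m - 1 - i + 1 by grind]
      _ = X ((∑ i ∈ range m, X ^ i) v) := by
          rw [sum_range_reflect (fun i => (X ^ (i + 1)) v), LinearMap.sum_apply, map_sum]
          simp only [pow_succ', Module.End.mul_apply]
      _ = 0 := by rw [hv, map_zero]
  have hpow (i : ℕ) (u : M) : X ((∑ j ∈ range i, X ^ j) u) - (∑ j ∈ range i, X ^ j) u =
      (X ^ i) u - u := LinearMap.congr_fun (mul_geom_sum X i) u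
  refine ⟨∑ i ∈ range m, (∑ j ∈ range i, X ^ j) (E ((X ^ (m - i)) v)), ?_⟩
  calc _ = (∑ i ∈ range m, X ^ i * E * X ^ (m - i)) v - E (∑ i ∈ range m, (X ^ (m - i)) v) := by
        rw [map_sum, ← sum_sub_distrib, sum_congr rfl fun i _ => hpow i _, sum_sub_distrib,
          map_sum, LinearMap.sum_apply]
        rfl
    _ = v := by rw [hE, hsum, map_zero, sub_zero, Module.End.one_apply]

end Averaging

variable {k G A : Type*} [CommRing k] [Group G] [AddCommGroup A] [Module k A]

variable (k A) in
/-- Right translation of functions on a group; it commutes with the left action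
`functionRepresentation k G G A`. -/
def rightTranslation : G →* Module.End k (G → A) where
  toFun x := LinearMap.funLeft k A (· * x)
  map_one' := by
    ext
    simp [LinearMap.funLeft_apply]
  map_mul' _ _ := by
    ext
    simp [LinearMap.funLeft_apply, mul_assoc]

theorem rightTranslation_apply (x g : G) (f : G → A) :
    rightTranslation k A x f g = f (g * x) := rfl

theorem commute_rightTranslation_functionRepresentation (x g : G) :
    Commute (rightTranslation k A x) (functionRepresentation k G G A g) := by
  refine LinearMap.ext fun f => funext fun h => ?_
  simp only [Module.End.mul_apply, rightTranslation_apply, functionRepresentation_apply,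
    smul_eq_mul, mul_assoc]

/-- The projection of the `A`-valued functions to those supported in a subset. -/
noncomputable def supportProjection (k A : Type*) {Ω : Type*} [CommRing k] [AddCommGroup A]
    [Module k A] (S : Set Ω) : Module.End k (Ω → A) where
  toFun := S.indicator
  map_add' := Set.indicator_add S
  map_smul' := Set.indicator_const_smul S

theorem supportProjection_apply {k Ω A : Type*} [CommRing k] [AddCommGroup A] [Module k A]
    (S : Set Ω) (f : Ω → A) : supportProjection k A S f = S.indicator f := rfl

theorem existsUnique_lt_orderOf_mul_pow_mem {x : G} (hx : IsOfFinOrder x) {S : Set G}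
    (hS : Subgroup.IsComplement S (Subgroup.zpowers x : Set G)) (g : G) :
    ∃! i, i < orderOf x ∧ g * x ^ i ∈ S := by
  obtain ⟨s, hs, huniq⟩ := Subgroup.isComplement_iff_existsUnique_inv_mul_mem.1 hS g
  obtain ⟨i, hi⟩ := (finEquivZPowers hx).surjective ⟨_, inv_mem hs⟩
  have hgi : g * x ^ i.1 = s := by
    rw [show x ^ i.1 = (s.1⁻¹ * g)⁻¹ from congrArg Subtype.val hi, mul_inv_rev, inv_inv,
      mul_inv_cancel_left]
  refine ⟨i, ⟨i.2, hgi ▸ s.2⟩, fun j ⟨hj, hgj⟩ => pow_injOn_Iio_orderOf hj i.2 ?_⟩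
  have hsj : ⟨g * x ^ j, hgj⟩ = s := huniq _ (by
    simp only [mul_inv_rev, inv_mul_cancel_right, SetLike.mem_coe, inv_mem_iff,
      Subgroup.npow_mem_zpowers])
  exact mul_left_cancel ((congrArg Subtype.val hsj).trans hgi.symm)

theorem sum_rightTranslation_mul_supportProjection {x : G} (hx : IsOfFinOrder x) {S : Set G}
    (hS : Subgroup.IsComplement S (Subgroup.zpowers x : Set G)) :
    ∑ i ∈ range (orderOf x), rightTranslation k A x ^ i * supportProjection k A S *
      rightTranslation k A x ^ (orderOf x - i) = 1 := by
  refine LinearMap.ext fun f => funext fun g => ?_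
  have happly (i : ℕ) (hi : i < orderOf x) :
      (rightTranslation k A x ^ i * supportProjection k A S *
        rightTranslation k A x ^ (orderOf x - i)) f g =
      {j | g * x ^ j ∈ S}.indicator (fun _ => f g) i := by
    classical
    calc _ = S.indicator (rightTranslation k A (x ^ (orderOf x - i)) f) (g * x ^ i) := by
          rw [← map_pow, ← map_pow]
          rfl
      _ = _ := by
          rw [Set.indicator_apply, Set.indicator_apply, rightTranslation_apply, mul_assoc,
            ← pow_add, Nat.add_sub_cancel' hi.le, pow_orderOf_eq_one, mul_one]
          rfl
  obtain ⟨i, ⟨hi, hgi⟩, huniq⟩ := existsUnique_lt_orderOf_mul_pow_mem hx hS g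
  rw [LinearMap.sum_apply, Finset.sum_apply, sum_congr rfl fun j hj => happly j (mem_range.1 hj),
    sum_eq_single_of_mem i (mem_range.2 hi),
    Set.indicator_of_mem (s := {j | g * x ^ j ∈ S}) hgi, Module.End.one_apply]
  exact fun j hj hji => Set.indicator_of_notMem (s := {j | g * x ^ j ∈ S})
    (fun hgj => hji (huniq j ⟨mem_range.1 hj, hgj⟩)) _

theorem commute_supportProjection_rightTranslation {x : G} {S : Set G}
    (hS : ∀ g, g * x ∈ S ↔ g ∈ S) :
    Commute (supportProjection k A S) (rightTranslation k A x) := by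
  refine LinearMap.ext fun f => funext fun g => ?_
  simp only [Module.End.mul_apply, supportProjection_apply, rightTranslation_apply]
  by_cases hg : g ∈ S
  · rw [Set.indicator_of_mem hg, Set.indicator_of_mem ((hS g).2 hg), rightTranslation_apply]
  · rw [Set.indicator_of_notMem hg, Set.indicator_of_notMem fun h => hg ((hS g).1 h)]

theorem rightTranslation_supportProjection_add {y : G} {S : Set G}
    (hS : ∀ g, g * y ∈ S ↔ g ∉ S) (f : G → A) :
    rightTranslation k A y (supportProjection k A S f) +
      supportProjection k A S (rightTranslation k A y f) = rightTranslation k A y f := by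
  funext g
  simp only [Pi.add_apply, supportProjection_apply, rightTranslation_apply]
  by_cases hg : g ∈ S
  · rw [Set.indicator_of_notMem fun h => (hS g).1 h hg, Set.indicator_of_mem hg, zero_add,
      rightTranslation_apply]
  · rw [Set.indicator_of_mem ((hS g).2 hg), Set.indicator_of_notMem hg, add_zero]

namespace IsQuaternionPair

variable {x y : G} {n : ℕ}

theorem index_zpowers (h : IsQuaternionPair x y n) : (Subgroup.zpowers x).index = 2 := by
  rw [Subgroup.index_eq_two_iff_exists_notMem_and']
  exact ⟨y⁻¹, mt inv_mem_iff.1 h.notMem, fun g => (h.mem_or_mem g).symm⟩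

theorem natCard_eq (h : IsQuaternionPair x y n) : Nat.card G = 2 * (2 * n) := by
  rw [← (Subgroup.zpowers x).card_mul_index, h.index_zpowers, Nat.card_zpowers, h.orderOf_eq,
    mul_comm]

theorem quaternionRelations (h : IsQuaternionPair x y n) : QuaternionRelations x y n where
  pow_eq_one := by rw [← h.orderOf_eq, pow_orderOf_eq_one]
  sq_eq := h.sq_eq
  mul_mul_eq := h.mul_mul_eq

theorem mul_right_mem_zpowers_iff (h : IsQuaternionPair x y n) (g : G) :
    g * y ∈ Subgroup.zpowers x ↔ g ∉ Subgroup.zpowers x := by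
  rw [Subgroup.mul_mem_iff_of_index_two h.index_zpowers, iff_false_right h.notMem]

theorem isQuaternionAcyclic_rightTranslation [Finite G] (h : IsQuaternionPair x y n) :
    IsQuaternionAcyclic (rightTranslation k A x) (rightTranslation k A y) n := by
  obtain ⟨S, hS, -⟩ := (Subgroup.zpowers x).exists_isComplement_left 1
  have hE := sum_rightTranslation_mul_supportProjection (k := k) (A := A)
    (isOfFinOrder_of_finite x) hS
  rw [h.orderOf_eq] at hE
  have hF {v : G → A} (hv : rightTranslation k A x v = v) :
      rightTranslation k A x (supportProjection k A (Subgroup.zpowers x : Set G) v) =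
        supportProjection k A (Subgroup.zpowers x : Set G) v := by
    have := LinearMap.congr_fun (commute_supportProjection_rightTranslation (k := k) (A := A)
      fun g => (Subgroup.zpowers x).mul_mem_cancel_right (Subgroup.mem_zpowers x)) v
    rw [Module.End.mul_apply, Module.End.mul_apply, hv] at this
    exact this.symm
  have hFY (v : G → A) :=
    rightTranslation_supportProjection_add (k := k) h.mul_right_mem_zpowers_iff v
  refine ⟨fun v => exists_sub_eq_of_geom_sum_eq_zero hE,
    fun v hv => ⟨_, geom_sum_apply_of_fixed hE hv⟩, fun v hv hy => ?_, fun v hv hy => ?_⟩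
  · refine ⟨-supportProjection k A (Subgroup.zpowers x : Set G) v, by rw [map_neg, hF hv], ?_⟩
    have := hFY v
    rw [hy, map_neg] at this
    rw [map_neg]
    linear_combination (norm := module) -this
  · refine ⟨supportProjection k A (Subgroup.zpowers x : Set G) v, hF hv, ?_⟩
    have := hFY v
    rwa [hy] at this

end IsQuaternionPair

end RightTranslation

section ThirdCohomology

open CategoryTheory

universe u

variable {k G A : Type u} [CommRing k] [Group G] [AddCommGroup A] [Module k A]

variable (k G A) in
theorem nonempty_groupCohomology_three_trivial_linearEquiv_of_isCyclic [Finite G] [IsCyclic G] :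
    Nonempty (groupCohomology (Rep.trivial k G A) 3 ≃ₗ[k]
      Submodule.torsionBy k A (Nat.card G : k)) := by
  let := IsCyclic.commGroup (α := G)
  have := Fintype.ofFinite G
  obtain ⟨g, hg⟩ := IsCyclic.exists_zpow_surjective (G := G)
  let S := Rep.FiniteCyclicGroup.subCompNormHom (Rep.trivial k G A) g
  have hf : S.f = 0 := ModuleCat.hom_ext (LinearMap.ext fun a => sub_self a)
  have hker : LinearMap.ker S.g.hom = Submodule.torsionBy k A (Nat.card G : k) := by
    ext a
    have hnorm : S.g.hom a = ∑ _ : G, a := LinearMap.sum_apply _ _ _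
    rw [LinearMap.mem_ker, Submodule.mem_torsionBy_iff, hnorm, Finset.sum_const, Finset.card_univ,
      Nat.card_eq_fintype_card, Nat.cast_smul_eq_nsmul]
  have := S.isIso_homologyπ hf
  exact ⟨(Rep.FiniteCyclicGroup.groupCohomologyIsoOdd (Rep.trivial k G A) g hg 3 (by decide) ≪≫
    (asIso S.homologyπ).symm ≪≫ S.moduleCatCyclesIso).toLinearEquiv.trans (.ofEq _ _ hker)⟩

theorem nonempty_invariants_rangeRep_linearEquiv {B : Rep.{u} k G}
    (d : B ⟶ Rep.of (functionRepresentation k G G A)) {W : Submodule k A}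
    (hW : ∀ a, Function.const G a ∈ Set.range d.hom ↔ a ∈ W) :
    Nonempty ((rangeRep d).ρ.invariants ≃ₗ[k] W) := by
  have hconst (v : (rangeRep d).ρ.invariants) : v.1.1 = Function.const G (v.1.1 1) :=
    eq_const_of_mem_invariants_functionRepresentation (k := k)
      fun g => congrArg Subtype.val (v.2 g)
  exact ⟨{
    toFun v := ⟨v.1.1 1, (hW _).1 (hconst v ▸ v.1.2)⟩
    invFun a := ⟨⟨Function.const G a.1, (hW a).2 a.2⟩, fun g => rfl⟩
    map_add' _ _ := rfl
    map_smul' _ _ := rfl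
    left_inv v := Subtype.ext (Subtype.ext (hconst v).symm)
    right_inv _ := rfl }⟩

theorem eq_const_of_rightTranslation_eq {s : Set G} (hs : Subgroup.closure s = ⊤) {f : G → A}
    (hf : ∀ x ∈ s, rightTranslation k A x f = f) : f = Function.const G (f 1) := by
  have hfix (g : G) : ∀ h, f (h * g) = f h := by
    induction hs.ge (Subgroup.mem_top g) using Subgroup.closure_induction with
    | mem x hx => exact congrFun (hf x hx)
    | one => exact fun h => by rw [mul_one]
    | mul a b _ _ ha hb => exact fun h => by rw [← mul_assoc, hb, ha]
    | inv a _ ha => exact fun h => by rw [← ha (h * a⁻¹), inv_mul_cancel_right]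
  exact funext fun g => by rw [Function.const_apply, ← hfix g 1, one_mul]

theorem rightTranslation_const (x : G) (a : A) :
    rightTranslation k A x (Function.const G a) = Function.const G a := rfl

theorem quaternionD₂_eq_zero_of_mem_invariants {x y : G} {v : (G → A) × (G → A)}
    (hv : v ∈ ((functionRepresentation k G G A).prod (functionRepresentation k G G A)).invariants) :
    quaternionD₂ (rightTranslation k A x) (rightTranslation k A y) v = 0 := by
  obtain ⟨c, c'⟩ := v
  have hc := eq_const_of_mem_invariants_functionRepresentation (k := k)
    fun g => congrArg Prod.fst (hv g)
  have hc' := eq_const_of_mem_invariants_functionRepresentation (k := k)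
    fun g => congrArg Prod.snd (hv g)
  rw [quaternionD₂_apply, hc, hc']
  simp only [rightTranslation_const, sub_self, add_zero]

namespace IsQuaternionPair

variable {x y : G} {n : ℕ}

theorem closure_eq_top (h : IsQuaternionPair x y n) : Subgroup.closure {x, y} = ⊤ := by
  have hx : Subgroup.zpowers x ≤ Subgroup.closure {x, y} :=
    Subgroup.zpowers_le.2 (Subgroup.subset_closure (Set.mem_insert x {y}))
  have hy : y ∈ Subgroup.closure {x, y} := Subgroup.subset_closure (Set.mem_insert_of_mem x rfl)
  exact eq_top_iff.2 fun g _ => (h.mem_or_mem g).elim (@hx g) fun hg =>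
    (Subgroup.mul_mem_cancel_left _ (inv_mem hy)).1 (hx hg)

theorem exact_const_quaternionD₀ (h : IsQuaternionPair x y n) :
    Function.Exact (constIntertwiningMap k G G A)
      (quaternionD₀ (rightTranslation k A x) (rightTranslation k A y)) := by
  refine fun f => ⟨fun hf => ⟨f 1, ?_⟩, ?_⟩
  · obtain ⟨hx, hy⟩ := Prod.mk_eq_zero.1 ((quaternionD₀_apply f).symm.trans hf)
    refine (eq_const_of_rightTranslation_eq (k := k) h.closure_eq_top ?_).symm
    rintro _ (rfl | rfl)
    exacts [sub_eq_zero.1 hx, sub_eq_zero.1 hy]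
  · rintro ⟨a, rfl⟩
    exact Prod.ext (sub_self _) (sub_self _)

theorem const_mem_range_quaternionD₂_iff [Finite G] (h : IsQuaternionPair x y n) (a : A) :
    Function.const G a ∈
        Set.range (quaternionD₂ (rightTranslation k A x) (rightTranslation k A y)) ↔
      a ∈ Submodule.torsionBy k A (Nat.card G : k) := by
  have hL : (∑ i ∈ Finset.range (2 * n), rightTranslation k A x ^ i) (Function.const G a) =
      Function.const G ((2 * n) • a) := by
    have hpow (i : ℕ) : (rightTranslation k A x ^ i) (Function.const G a) = Function.const G a := by
      rw [← map_pow, rightTranslation_const]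
    rw [LinearMap.sum_apply, Finset.sum_congr rfl fun i _ => hpow i, Finset.sum_const,
      Finset.card_range]
    rfl
  rw [mem_range_quaternionD₂_iff (h.quaternionRelations.map _)
    h.isQuaternionAcyclic_rightTranslation, hL, rightTranslation_const, eq_neg_iff_add_eq_zero,
    ← two_nsmul, Submodule.mem_torsionBy_iff, Nat.cast_smul_eq_nsmul, h.natCard_eq]
  have hmul : (2 * (2 * n)) • a = 2 • (2 * n) • a := mul_nsmul' a 2 (2 * n)
  exact ⟨fun ha => hmul.trans (congrFun ha 1), fun ha => funext fun _ => hmul.symm.trans ha⟩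

theorem nonempty_groupCohomology_three_trivial_linearEquiv [Finite G]
    (h : IsQuaternionPair x y n) :
    Nonempty (groupCohomology (Rep.trivial k G A) 3 ≃ₗ[k]
      Submodule.torsionBy k A (Nat.card G : k)) := by
  let ρ := functionRepresentation k G G A
  let X := rightTranslation k A x
  let Y := rightTranslation k A y
  have hρ (z g : G) := commute_rightTranslation_functionRepresentation (k := k) (A := A) z g
  let d₀ : Rep.of ρ ⟶ Rep.of (ρ.prod ρ) :=
    Rep.ofHom ⟨quaternionD₀ X Y, fun g => quaternionD₀_comp (hρ x g) (hρ y g)⟩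
  let d₁ : Rep.of (ρ.prod ρ) ⟶ Rep.of (ρ.prod ρ) :=
    Rep.ofHom ⟨quaternionD₁ X Y n, fun g => quaternionD₁_comp n (hρ x g) (hρ y g)⟩
  let d₂ : Rep.of (ρ.prod ρ) ⟶ Rep.of ρ :=
    Rep.ofHom ⟨quaternionD₂ X Y, fun g => quaternionD₂_comp (hρ x g) (hρ y g)⟩
  have hXY : QuaternionRelations X Y n := h.quaternionRelations.map _
  have hacyclic := h.isQuaternionAcyclic_rightTranslation (k := k) (A := A)
  obtain ⟨e⟩ := nonempty_groupCohomology_three_linearEquiv_invariants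
    (i := Rep.ofHom (constIntertwiningMap k G G A)) (d₀ := d₀) (d₁ := d₁) (d₂ := d₂)
    (fun _ _ hab => congrFun hab 1) h.exact_const_quaternionD₀
    (exact_quaternionD₀_quaternionD₁ hXY hacyclic) (exact_quaternionD₁_quaternionD₂ hXY hacyclic)
    (isZero_groupCohomology_function k G A) (isZero_groupCohomology_function_prod k G A)
    (isZero_groupCohomology_function_prod k G A)
    fun v hv => quaternionD₂_eq_zero_of_mem_invariants hv
  obtain ⟨e'⟩ := nonempty_invariants_rangeRep_linearEquiv d₂ h.const_mem_range_quaternionD₂_iff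
  exact ⟨e.trans e'⟩

end IsQuaternionPair

end ThirdCohomology

section Transfer

open CategoryTheory

universe u

variable {k G A : Type u} [CommRing k] [Group G] [AddCommGroup A] [Module k A]
  {Ω Ω' Ω'' : Type u} [MulAction G Ω] [MulAction G Ω'] [MulAction G Ω'']

theorem functionRep_hom_ext {B : Rep.{u} k G}
    {φ ψ : B ⟶ Rep.of (functionRepresentation k G Ω A)}
    (h : ∀ b ω, (φ.hom b : Ω → A) ω = (ψ.hom b : Ω → A) ω) : φ = ψ :=
  Rep.hom_ext (Representation.IntertwiningMap.ext (LinearMap.ext fun b => funext (h b)))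

variable (k A) in
/-- Precomposition with a map of `G`-sets. For an orbit map `G ⧸ S → G ⧸ S'` it induces the
restriction from `S'` to `S` in cohomology. -/
def pullback (φ : Ω →[G] Ω') : Rep.of (functionRepresentation k G Ω' A) ⟶
    Rep.of (functionRepresentation k G Ω A) :=
  Rep.ofHom ⟨LinearMap.funLeft k A φ, fun g => LinearMap.ext fun f => funext fun ω =>
    congrArg f (map_smul φ g⁻¹ ω).symm⟩

theorem pullback_id : pullback k A (MulActionHom.id G : Ω →[G] Ω) = 𝟙 _ := rfl

theorem pullback_comp (ψ : Ω' →[G] Ω'') (φ : Ω →[G] Ω') :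
    pullback k A (ψ.comp φ) = pullback k A ψ ≫ pullback k A φ := rfl

open Classical in
variable (k A) in
/-- Summation over the fibres of a map of `G`-sets. For an orbit map `G ⧸ S → G ⧸ S'` it induces
the transfer from `S` to `S'` in cohomology. -/
noncomputable def pushforward [Fintype Ω] (φ : Ω →[G] Ω') :
    Rep.of (functionRepresentation k G Ω A) ⟶ Rep.of (functionRepresentation k G Ω' A) :=
  Rep.ofHom ⟨LinearMap.pi fun ω' => ∑ ω with φ ω = ω', LinearMap.proj ω, fun g => by
    ext f ω'
    simp only [LinearMap.comp_apply, LinearMap.pi_apply, LinearMap.sum_apply, LinearMap.proj_apply,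
      functionRepresentation_apply]
    exact Finset.sum_equiv (MulAction.toPerm g⁻¹) (by simp) (by simp)⟩

open Classical in
theorem pushforward_apply [Fintype Ω] (φ : Ω →[G] Ω') (f : Ω → A) (ω' : Ω') :
    ((pushforward k A φ).hom f : Ω' → A) ω' = ∑ ω with φ ω = ω', f ω := by
  change (LinearMap.pi fun ω' => ∑ ω with φ ω = ω', LinearMap.proj (R := k) ω) f ω' = _
  simp

open Classical in
theorem card_fiber_mul_card [Fintype Ω] [Finite Ω'] [MulAction.IsPretransitive G Ω']
    (φ : Ω →[G] Ω') (ω' : Ω') : Finset.card {ω | φ ω = ω'} * Nat.card Ω' = Nat.card Ω := by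
  have := Fintype.ofFinite Ω'
  have hfiber (ω'' : Ω') : Finset.card {ω | φ ω = ω''} = Finset.card {ω | φ ω = ω'} := by
    obtain ⟨g, rfl⟩ := MulAction.exists_smul_eq G ω' ω''
    exact Finset.card_equiv (MulAction.toPerm g⁻¹) (by simp [inv_smul_eq_iff])
  calc Finset.card {ω | φ ω = ω'} * Nat.card Ω'
      = ∑ ω'' : Ω', Finset.card {ω | φ ω = ω''} := by
        simp only [hfiber, Finset.sum_const, Finset.card_univ, Nat.card_eq_fintype_card,
          smul_eq_mul, mul_comm]
    _ = Nat.card Ω := by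
        rw [Nat.card_eq_fintype_card, ← Finset.card_univ]
        exact (Finset.card_eq_sum_card_fiberwise fun ω _ => Finset.mem_univ (φ ω)).symm

theorem pullback_comp_pushforward [Fintype Ω] [Finite Ω'] [MulAction.IsPretransitive G Ω']
    (φ : Ω →[G] Ω') {c : ℕ} (hc : c * Nat.card Ω' = Nat.card Ω) :
    pullback k A φ ≫ pushforward k A φ = c • 𝟙 _ := by
  classical
  refine functionRep_hom_ext fun (f : Ω' → A) ω' => ?_
  have : Nonempty Ω' := ⟨ω'⟩
  calc ((pushforward k A φ).hom ((pullback k A φ).hom f) : Ω' → A) ω'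
      = ∑ ω with φ ω = ω', f ω' := (pushforward_apply φ _ ω').trans <|
        Finset.sum_congr rfl fun ω hω => congrArg f (Finset.mem_filter.1 hω).2
    _ = c • f ω' := by
        rw [Finset.sum_const, Nat.eq_of_mul_eq_mul_right Nat.card_pos
          ((card_fiber_mul_card φ ω').trans hc.symm)]

theorem pushforward_comp_pullback [Fintype Ω] [Subsingleton Ω''] (π : Ω →[G] Ω'')
    (π' : Ω' →[G] Ω'') (α : Ω → Ω' →[G] Ω) (hα : ∀ ω', Function.Bijective fun ω => α ω ω') :
    pushforward k A π ≫ pullback k A π' = ∑ ω, pullback k A (α ω) := by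
  classical
  refine functionRep_hom_ext fun (f : Ω → A) ω' => ?_
  have hsum : ((∑ ω, pullback k A (α ω)).hom f : Ω' → A) ω' = ∑ ω, f (α ω ω') := by
    rw [Rep.sum_hom, Representation.IntertwiningMap.sum_apply, Finset.sum_apply]
    rfl
  rw [hsum, (hα ω').sum_comp]
  refine (pushforward_apply π f _).trans ?_
  simp only [eq_iff_true_of_subsingleton, Finset.filter_true]

theorem additive_groupCohomology_functor (k G : Type u) [CommRing k] [Group G] (n : ℕ) :
    (groupCohomology.functor k G n).Additive :=
  inferInstanceAs (groupCohomology.cochainsFunctor k G ⋙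
    HomologicalComplex.homologyFunctor (ModuleCat k) (ComplexShape.up ℕ) n).Additive

theorem map_pullback_eq_id {n : ℕ}
    (hcard : Nat.card (groupCohomology (Rep.of (functionRepresentation k G Ω A)) n) = 2)
    {φ ψ : Ω →[G] Ω} (h : φ.comp ψ = MulActionHom.id G) :
    (groupCohomology.functor k G n).map (pullback k A φ) = 𝟙 _ := by
  set F := groupCohomology.functor k G n
  have hinv : F.map (pullback k A φ) ≫ F.map (pullback k A ψ) = 𝟙 _ := by
    rw [← F.map_comp, ← pullback_comp, h, pullback_id, F.map_id]
  have hinj : Function.Injective (F.map (pullback k A φ)).hom :=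
    Function.LeftInverse.injective (g := (F.map (pullback k A ψ)).hom) fun x =>
      congrArg (fun f => f.hom x) hinv
  obtain ⟨_, _, hunique⟩ := (Nat.card_eq_two_iff' 0).1 hcard
  refine ModuleCat.hom_ext (LinearMap.ext fun x => ?_)
  by_cases hx : x = 0
  · rw [hx, map_zero, map_zero]
  · exact (hunique _ ((map_ne_zero_iff _ hinj).2 hx)).trans (hunique x hx).symm

/-- The map `x Z ↦ x c S`. The maps of this form restrict a class of `S` to the conjugates of
`Z ≤ S`. -/
def quotientMulRight {Z S : Subgroup G} [Z.Normal] (h : Z ≤ S) (c : G ⧸ Z) : G ⧸ Z →[G] G ⧸ S where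
  toFun x := Subgroup.quotientMapOfLE h (x * c)
  map_smul' g x := by
    induction x using QuotientGroup.induction_on
    induction c using QuotientGroup.induction_on
    exact congrArg QuotientGroup.mk (mul_assoc g _ _)

theorem quotientMulRight_comp {Z S : Subgroup G} [Z.Normal] (h : Z ≤ S) (c d : G ⧸ Z) :
    (quotientMulRight h c).comp (quotientMulRight le_rfl d) = quotientMulRight h (d * c) := by
  ext x
  induction x using QuotientGroup.induction_on
  induction c using QuotientGroup.induction_on
  induction d using QuotientGroup.induction_on
  exact congrArg QuotientGroup.mk (mul_assoc _ _ _)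

theorem quotientMulRight_one (Z : Subgroup G) [Z.Normal] :
    quotientMulRight (le_refl Z) 1 = MulActionHom.id G := by
  ext x
  induction x using QuotientGroup.induction_on
  exact congrArg QuotientGroup.mk (mul_one _)

theorem quotientMulRight_out_bijective {Z S : Subgroup G} [Z.Normal] (h : Z ≤ S) (x : G ⧸ Z) :
    Function.Bijective fun ω : G ⧸ S => quotientMulRight h (ω.out : G) x := by
  induction x using QuotientGroup.induction_on with | H g =>
  have horbit (ω : G ⧸ S) : quotientMulRight h (ω.out : G) (g : G ⧸ Z) = g • ω :=
    MulAction.Quotient.coe_smul_out S g ω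
  simpa only [horbit] using MulAction.bijective g

theorem map_pullback_quotientMulRight {Z S : Subgroup G} [Z.Normal] (h : Z ≤ S) {n : ℕ}
    (hcard : Nat.card (groupCohomology (Rep.of (functionRepresentation k G (G ⧸ Z) A)) n) = 2)
    (c : G ⧸ Z) :
    (groupCohomology.functor k G n).map (pullback k A (quotientMulRight h c)) =
      (groupCohomology.functor k G n).map (pullback k A (quotientMulRight h 1)) := by
  have hinv : (quotientMulRight le_rfl c).comp (quotientMulRight le_rfl c⁻¹) =
      MulActionHom.id G := by
    rw [quotientMulRight_comp, inv_mul_cancel, quotientMulRight_one]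
  rw [← mul_one c, ← quotientMulRight_comp, pullback_comp, Functor.map_comp,
    map_pullback_eq_id hcard hinv, Category.comp_id]

/-- In the double coset formula for a normal subgroup `Z` all terms are conjugate to each other, and
conjugation acts trivially on a cohomology group of order `2`. -/
theorem map_pushforward_comp_pullback {Z S : Subgroup G} [Z.Normal] (h : Z ≤ S) [Fintype (G ⧸ S)]
    {n : ℕ}
    (hcard : Nat.card (groupCohomology (Rep.of (functionRepresentation k G (G ⧸ Z) A)) n) = 2)
    [Subsingleton Ω] (π : G ⧸ S →[G] Ω) (π' : G ⧸ Z →[G] Ω) :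
    (groupCohomology.functor k G n).map (pushforward k A π ≫ pullback k A π') =
      Nat.card (G ⧸ S) •
        (groupCohomology.functor k G n).map (pullback k A (quotientMulRight h 1)) := by
  have := additive_groupCohomology_functor k G n
  rw [pushforward_comp_pullback π π' (fun ω => quotientMulRight h (ω.out : G))
    (quotientMulRight_out_bijective h), Functor.map_sum,
    Finset.sum_congr rfl fun ω _ => map_pullback_quotientMulRight h hcard _, Finset.sum_const,
    Finset.card_univ, Nat.card_eq_fintype_card]

theorem natCard_dvd_of_map_pullback_eq_zero [Finite Ω] [Finite Ω']
    [MulAction.IsPretransitive G Ω'] {φ : Ω →[G] Ω'} {c n : ℕ} (hc : c * Nat.card Ω' = Nat.card Ω)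
    [IsAddCyclic (groupCohomology (Rep.of (functionRepresentation k G Ω' A)) n)]
    (h : (groupCohomology.functor k G n).map (pullback k A φ) = 0) :
    Nat.card (groupCohomology (Rep.of (functionRepresentation k G Ω' A)) n) ∣ c := by
  have := Fintype.ofFinite Ω
  have := additive_groupCohomology_functor k G n
  have hzero : c • 𝟙 (groupCohomology (Rep.of (functionRepresentation k G Ω' A)) n) = 0 := by
    calc _ = (groupCohomology.functor k G n).map (pullback k A φ ≫ pushforward k A φ) := by
          rw [pullback_comp_pushforward φ hc, Functor.map_nsmul]
          exact congrArg (c • ·) ((groupCohomology.functor k G n).map_id _).symm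
      _ = 0 := by rw [Functor.map_comp, h, Limits.zero_comp]
  rw [← IsAddCyclic.exponent_eq_card, AddMonoid.exponent_dvd_iff_forall_nsmul_eq_zero]
  exact fun y => congrArg (fun f => f.hom y) hzero

variable (k A) in
theorem nonempty_trivial_iso_functionRepresentation [Unique Ω] :
    Nonempty (Rep.trivial k G A ≅ Rep.of (functionRepresentation k G Ω A)) :=
  ⟨Rep.mkIso (.mk (LinearEquiv.funUnique Ω k A).symm fun _ => rfl)⟩

theorem map_pullback_quotientMulRight_ne_zero [Finite G] {Z S : Subgroup G} [Z.Normal] (hZ : Z ≠ ⊥)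
    (h : Z ≤ S) {n : ℕ}
    [IsAddCyclic (groupCohomology (Rep.of (functionRepresentation k G (G ⧸ S) A)) n)]
    (hcard : Nat.card (groupCohomology (Rep.of (functionRepresentation k G (G ⧸ S) A)) n) =
      Nat.card S) :
    (groupCohomology.functor k G n).map (pullback k A (quotientMulRight h 1)) ≠ 0 := by
  intro hzero
  have hdvd : Nat.card S ∣ Z.relIndex S :=
    hcard ▸ natCard_dvd_of_map_pullback_eq_zero (Subgroup.relIndex_mul_index h) hzero
  have hmul : Nat.card Z * Z.relIndex S = Nat.card S := by
    rw [← Subgroup.relIndex_bot_left, ← Subgroup.relIndex_bot_left,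
      Subgroup.relIndex_mul_relIndex _ _ _ bot_le h]
  have hpos : 0 < Z.relIndex S := Nat.pos_of_mul_pos_left (hmul ▸ Nat.card_pos)
  have hlt : 1 * Z.relIndex S < Nat.card Z * Z.relIndex S :=
    Nat.mul_lt_mul_of_pos_right (Z.one_lt_card_iff_ne_bot.2 hZ) hpos
  exact (Nat.le_of_dvd hpos hdvd).not_gt (by rwa [one_mul, hmul] at hlt)

theorem nonempty_primaryComponent_addEquiv_function [Finite G] (T : Sylow 2 G)
    {Z : Subgroup G} [Z.Normal] (hZ : Z ≠ ⊥) (hZT : Z ≤ T) {n : ℕ}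
    (hZcard : Nat.card (groupCohomology (Rep.of (functionRepresentation k G (G ⧸ Z) A)) n) = 2)
    [IsAddCyclic (groupCohomology (Rep.of (functionRepresentation k G (G ⧸ (T : Subgroup G)) A)) n)]
    (hTcard : Nat.card (groupCohomology
      (Rep.of (functionRepresentation k G (G ⧸ (T : Subgroup G)) A)) n) = Nat.card T) :
    Nonempty (AddCommGroup.primaryComponent (groupCohomology (Rep.trivial k G A) n) 2 ≃+
      groupCohomology (Rep.of (functionRepresentation k G (G ⧸ (T : Subgroup G)) A)) n) := by
  have := Fintype.ofFinite (G ⧸ (T : Subgroup G))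
  have := Fintype.ofFinite (G ⧸ Z)
  have := additive_groupCohomology_functor k G n
  obtain ⟨ε⟩ := nonempty_trivial_iso_functionRepresentation k (G := G) A (Ω := PUnit.{u + 1})
  obtain ⟨r, hr⟩ := T.isPGroup'.exists_card_eq
  let F := groupCohomology.functor k G n
  let π (S : Subgroup G) : G ⧸ S →[G] PUnit.{u + 1} := ⟨fun _ => PUnit.unit, fun _ _ => rfl⟩
  let res := F.map (ε.hom ≫ pullback k A (π T))
  let tr := F.map (pushforward k A (π T) ≫ ε.inv)
  let χ := F.map (pullback k A (quotientMulRight hZT 1))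
  have htr : res ≫ tr = (T : Subgroup G).index • 𝟙 (F.obj (Rep.trivial k G A)) := by
    rw [← Functor.map_comp, Category.assoc, ← Category.assoc (pullback k A (π T)),
      pullback_comp_pushforward (π T) (c := (T : Subgroup G).index) (by
        rw [Nat.card_unique, mul_one, Subgroup.index]), Preadditive.nsmul_comp,
      Category.id_comp, Preadditive.comp_nsmul, ε.hom_inv_id, F.map_nsmul, F.map_id]
  have hstable : tr ≫ res ≫ χ = (T : Subgroup G).index • χ := by
    rw [Subgroup.index, ← map_pushforward_comp_pullback hZT hZcard (π T) (π Z),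
      ← F.map_comp, ← F.map_comp, Category.assoc, Category.assoc, ε.inv_hom_id_assoc]
    rfl
  have hχ : χ ≠ 0 := map_pullback_quotientMulRight_ne_zero hZ hZT hTcard
  have htwo (z : groupCohomology (Rep.of (functionRepresentation k G (G ⧸ Z) A)) n) :
      2 • z = 0 := by
    rw [← hZcard, card_nsmul_eq_zero']
  exact nonempty_primaryComponent_addEquiv Nat.prime_two (hTcard.trans hr)
    ((Nat.Prime.coprime_iff_not_dvd Nat.prime_two).2 T.not_dvd_index)
    (res := res.hom.toAddMonoidHom) (tr := tr.hom.toAddMonoidHom) (χ := χ.hom.toAddMonoidHom)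
    (fun x => congrArg (fun f => f.hom x) htr)
    (fun h => hχ (ModuleCat.hom_ext (LinearMap.ext fun y => DFunLike.congr_fun h y)))
    (fun _ => htwo _)
    (fun y => congrArg (fun f => f.hom y) hstable)

theorem nonempty_primaryComponent_groupCohomology_addEquiv [Finite G] (T : Sylow 2 G)
    {Z : Subgroup G} [Z.Normal] (hZ : Z ≠ ⊥) (hZT : Z ≤ T) {n : ℕ}
    (hZcard : Nat.card (groupCohomology (Rep.trivial k Z A) n) = 2)
    [IsAddCyclic (groupCohomology (Rep.trivial k T A) n)]
    (hTcard : Nat.card (groupCohomology (Rep.trivial k T A) n) = Nat.card T) :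
    Nonempty (AddCommGroup.primaryComponent (groupCohomology (Rep.trivial k G A) n) 2 ≃+
      groupCohomology (Rep.trivial k T A) n) := by
  obtain ⟨eT⟩ := nonempty_groupCohomology_function_iso k G A
    (MulAction.stabilizer_quotient (T : Subgroup G)) n
  obtain ⟨eZ⟩ := nonempty_groupCohomology_function_iso k G A (MulAction.stabilizer_quotient Z) n
  have : IsAddCyclic
      (groupCohomology (Rep.of (functionRepresentation k G (G ⧸ (T : Subgroup G)) A)) n) :=
    isAddCyclic_of_surjective eT.symm.toLinearEquiv eT.symm.toLinearEquiv.surjective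
  obtain ⟨e⟩ := nonempty_primaryComponent_addEquiv_function T hZ hZT
    ((Nat.card_congr eZ.toLinearEquiv.toEquiv).trans hZcard)
    ((Nat.card_congr eT.toLinearEquiv.toEquiv).trans hTcard)
  exact ⟨e.trans eT.toLinearEquiv.toAddEquiv⟩

end Transfer

theorem existsUnique_orderOf_subgroup {G : Type*} [Group G] {S : Subgroup G} {n : ℕ}
    (huniq : ∃! g : G, orderOf g = n) {z : G} (hzS : z ∈ S) (hz : orderOf z = n) :
    ∃! g : S, orderOf g = n :=
  ⟨⟨z, hzS⟩, (Subgroup.orderOf_mk z hzS).trans hz, fun g hg =>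
    Subtype.ext (huniq.unique ((Subgroup.orderOf_coe g).trans hg) hz)⟩

section GeneralCoefficients

universe u

variable {k G A : Type u} [CommRing k] [Group G] [AddCommGroup A] [Module k A]

theorem natCard_torsionBy_of_dvd {m n : ℕ} [NeZero n] (h : m ∣ n)
    [IsAddCyclic (Submodule.torsionBy k A (n : k))]
    (hn : Nat.card (Submodule.torsionBy k A (n : k)) = n) :
    Nat.card (Submodule.torsionBy k A (m : k)) = m := by
  have := Nat.finite_of_card_ne_zero (hn.trans_ne (NeZero.ne n))
  have hle (a : A) (ha : (m : k) • a = 0) : (n : k) • a = 0 := by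
    obtain ⟨c, rfl⟩ := h
    rw [Nat.cast_mul, mul_comm, mul_smul, ha, smul_zero]
  let e : (nsmulAddMonoidHom m : Submodule.torsionBy k A (n : k) →+ _).ker ≃
      Submodule.torsionBy k A (m : k) :=
    { toFun a := ⟨a.1.1, (Nat.cast_smul_eq_nsmul k m _).trans (congrArg Subtype.val a.2)⟩
      invFun a :=
        ⟨⟨a.1, hle a.1 a.2⟩, Subtype.ext ((Nat.cast_smul_eq_nsmul k m _).symm.trans a.2)⟩ }
  rw [← Nat.card_congr e, IsAddCyclic.card_nsmulAddMonoidHom_ker, hn, Nat.gcd_eq_right h]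

variable (k A) in
theorem nonempty_groupCohomology_three_trivial_linearEquiv_of_isPGroup [Finite G]
    (hG : IsPGroup 2 G) (huniq : ∃! g : G, orderOf g = 2) :
    Nonempty (groupCohomology (Rep.trivial k G A) 3 ≃ₗ[k]
      Submodule.torsionBy k A (Nat.card G : k)) := by
  obtain h | ⟨x, y, n, h⟩ := isCyclic_or_exists_isQuaternionPair hG huniq
  · exact nonempty_groupCohomology_three_trivial_linearEquiv_of_isCyclic k G A
  · exact h.nonempty_groupCohomology_three_trivial_linearEquiv

theorem two_primary_third_cohomology_cyclic_general [Finite G]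
    (huniq : ∃! g : G, orderOf g = 2) (T : Sylow 2 G)
    [IsAddCyclic (Submodule.torsionBy k A (Nat.card T : k))]
    (hA : Nat.card (Submodule.torsionBy k A (Nat.card T : k)) = Nat.card T) :
    IsAddCyclic (AddCommGroup.primaryComponent (groupCohomology (Rep.trivial k G A) 3) 2) ∧
    Nat.card (AddCommGroup.primaryComponent (groupCohomology (Rep.trivial k G A) 3) 2) =
      Nat.card T := by
  have hdvd : 2 ∣ Nat.card T :=
    T.dvd_card_of_dvd_card (huniq.exists.choose_spec ▸ orderOf_dvd_natCard _)
  obtain ⟨z, hzT⟩ := exists_prime_orderOf_dvd_card' 2 hdvd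
  have hz : orderOf (z : G) = 2 := (Subgroup.orderOf_coe z).trans hzT
  have : (Subgroup.zpowers (z : G)).Normal :=
    normal_zpowers_of_existsUnique_orderOf_eq huniq hz
  have hZ : Nat.card (Subgroup.zpowers (z : G)) = 2 := (Nat.card_zpowers _).trans hz
  obtain ⟨eT⟩ := nonempty_groupCohomology_three_trivial_linearEquiv_of_isPGroup k A T.isPGroup'
    (existsUnique_orderOf_subgroup huniq z.2 hz)
  obtain ⟨eZ⟩ := nonempty_groupCohomology_three_trivial_linearEquiv_of_isCyclic k
    (Subgroup.zpowers (z : G)) A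
  have : NeZero (Nat.card T) := ⟨Nat.card_pos.ne'⟩
  have hcyc : IsAddCyclic (groupCohomology (Rep.trivial k T A) 3) :=
    isAddCyclic_of_surjective eT.symm eT.symm.surjective
  have hT := (Nat.card_congr eT.toEquiv).trans hA
  obtain ⟨e⟩ := nonempty_primaryComponent_groupCohomology_addEquiv T
    (fun h => by simp [h] at hZ) (Subgroup.zpowers_le.2 z.2)
    ((Nat.card_congr eZ.toEquiv).trans (by rw [hZ, natCard_torsionBy_of_dvd hdvd hA])) hT
  exact ⟨isAddCyclic_of_surjective e.symm e.symm.surjective, (Nat.card_congr e.toEquiv).trans hT⟩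

end GeneralCoefficients

/-- Torsion in the units, written additively, is given by roots of unity. -/
def torsionByUnitsEquiv (M : Type*) [CommMonoid M] (n : ℕ) :
    Submodule.torsionBy ℤ (Additive Mˣ) (n : ℤ) ≃+ Additive (rootsOfUnity n M) where
  toFun a := .ofMul ⟨a.1.toMul, (natCast_zsmul a.1 n).symm.trans a.2⟩
  invFun a := ⟨.ofMul a.toMul.1, (natCast_zsmul _ n).trans a.toMul.2⟩
  map_add' _ _ := rfl

/-- If a finite group `G` has exactly one element of order 2 and `T` is a Sylow
2-subgroup, then the 2-primary component of `H³(G, ℂˣ)` (with trivial action) is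
cyclic of order `|T|`. -/
theorem two_primary_third_cohomology_cyclic
    (G : Type) [Group G] [Finite G]
    (huniq : ∃! g : G, orderOf g = 2)
    (T : Sylow 2 G) :
    IsAddCyclic
      (AddCommGroup.primaryComponent
        (groupCohomology (Rep.trivial ℤ G (Additive ℂˣ)) 3) 2) ∧
    Nat.card
      (AddCommGroup.primaryComponent
        (groupCohomology (Rep.trivial ℤ G (Additive ℂˣ)) 3) 2) = Nat.card T := by
  have : NeZero (Nat.card T) := ⟨Nat.card_pos.ne'⟩
  have := isAddCyclic_of_surjective _ (torsionByUnitsEquiv ℂ (Nat.card T)).symm.surjective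
  exact two_primary_third_cohomology_cyclic_general huniq T <|
    (Nat.card_congr (torsionByUnitsEquiv ℂ _).toEquiv).trans (Complex.card_rootsOfUnity _)
end
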